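/- Let X and Y be pure simplicial complexes with dim X ≥ 0 and dim Y ≥ 0, and let Y₀ be a nonempty subset of V(Y). Assume that sd X is star decomposable in vertices, that the pair (sd Y, Y₀) is star decomposable in vertices, and that st(Y₀, sd Y) has trivial reduced homology. Let ≺ be a total order on V(X) ⊔ V(Y) such that: (i) the restriction of ≺ to V(X) induces a star decomposition of (sd X, V(X)) in vertices; (ii) the restriction of ≺ to V(Y) induces a star decomposition of (sd Y, Y₀) in vertices; (iii) Y₀ = (V(X) ⊔ V(Y))_{≻x̂}, where x̂ is the ≺-largest element of V(X). Then ≺ induces a star decomposition of (sd(X * Y), Y₀) in vertices. -/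

import Mathlib

/-! Common definitions: finite abstract simplicial complexes, links, stars,
barycentric subdivision, joins, collapsibility, shellability, vertex
decomposability, star decomposability (also "in vertices"), and simplicial
homology (reduced, over ℤ and ℤ₂). -/

namespace Paper

open Finset

variable {V : Type*} [DecidableEq V]

/-- `K` is a (finite, abstract) simplicial complex: downward closed family of finsets. -/
def IsCplx (K : Finset (Finset V)) : Prop :=
  ∀ σ ∈ K, ∀ τ ⊆ σ, τ ∈ K

/-- Vertex set of a complex. -/
def verts (K : Finset (Finset V)) : Finset V := K.sup id

/-- Dimension of a complex (as an integer; `-1` for `∅` and `{∅}`). -/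
def dim (K : Finset (Finset V)) : ℤ := ((K.sup Finset.card : ℕ) : ℤ) - 1

/-- The facets (inclusion-maximal faces) of `K`. -/
def facets (K : Finset (Finset V)) : Finset (Finset V) :=
  K.filter fun σ => ∀ τ ∈ K, σ ⊆ τ → σ = τ

/-- `K` is pure `d`-dimensional: it is nonempty, every face has dimension at most `d`
and every face is contained in a face of dimension exactly `d`. -/
def PureDim (K : Finset (Finset V)) (d : ℤ) : Prop :=
  K.Nonempty ∧ (∀ σ ∈ K, (σ.card : ℤ) ≤ d + 1) ∧
    ∀ σ ∈ K, ∃ τ ∈ K, σ ⊆ τ ∧ (τ.card : ℤ) = d + 1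

/-- Link of a face. -/
def lk (σ : Finset V) (K : Finset (Finset V)) : Finset (Finset V) :=
  (K.filter fun τ => σ ⊆ τ).image fun τ => τ \ σ

/-- Closed star of a face. -/
def star (σ : Finset V) (K : Finset (Finset V)) : Finset (Finset V) :=
  K.filter fun τ => τ ∪ σ ∈ K

/-- Union of the closed stars of a set of vertices. -/
def starSet (S : Finset V) (K : Finset (Finset V)) : Finset (Finset V) :=
  K.filter fun τ => ∃ v ∈ S, τ ∪ {v} ∈ K

/-- Subcomplex induced on a vertex set `S`. -/
def induced (S : Finset V) (K : Finset (Finset V)) : Finset (Finset V) :=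
  K.filter fun σ => σ ⊆ S

/-- Deletion of a vertex:  `K - v`. -/
def deleteV (v : V) (K : Finset (Finset V)) : Finset (Finset V) :=
  K.filter fun σ => v ∉ σ

/-- The full simplex on vertex set `σ`. -/
def simplexCplx (σ : Finset V) : Finset (Finset V) := σ.powerset

/-- The boundary `∂σ` of the simplex on `σ`: all proper subsets of `σ`. -/
def bdSimplex (σ : Finset V) : Finset (Finset V) := σ.powerset.erase σ

/-- Barycentric subdivision: vertices are the nonempty faces of `K`, faces are
chains of nonempty faces of `K`. -/
def sd (K : Finset (Finset V)) : Finset (Finset (Finset V)) :=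
  if K = ∅ then ∅ else
    K.powerset.filter fun c => (∅ ∉ c) ∧ ∀ σ ∈ c, ∀ τ ∈ c, σ ⊆ τ ∨ τ ⊆ σ

/-- Join of two simplicial complexes (on the disjoint union of vertex types). -/
def join {α β : Type*} [DecidableEq α] [DecidableEq β]
    (X : Finset (Finset α)) (Y : Finset (Finset β)) : Finset (Finset (α ⊕ β)) :=
  (X ×ˢ Y).image fun p => p.1.image Sum.inl ∪ p.2.image Sum.inr

/-- `K'` arises from `K` by an elementary collapse: remove a free face `σ`
together with the unique face `τ` properly containing it. -/
def ElemCollapse (K K' : Finset (Finset V)) : Prop :=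
  ∃ σ ∈ K, ∃ τ ∈ K, σ ⊂ τ ∧ (∀ ρ ∈ K, σ ⊂ ρ → ρ = τ) ∧ K' = (K.erase σ).erase τ

/-- `K` collapses to `K'`. -/
def CollapsesTo (K K' : Finset (Finset V)) : Prop :=
  Relation.ReflTransGen ElemCollapse K K'

/-- `K` is collapsible: it collapses to a single vertex. -/
def Collapsible (K : Finset (Finset V)) : Prop :=
  ∃ w : V, CollapsesTo K ({∅, {w}} : Finset (Finset V))

/-- The removal-collapsibility condition: `K` is empty, or becomes collapsible
after removal of a set of facets. -/
def RC (K : Finset (Finset V)) : Prop :=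
  K = ∅ ∨ ∃ F ⊆ facets K, Collapsible (K \ F)

/-- The hereditary removal-collapsibility condition: the link of every face
(including the empty face, whose link is `K` itself) satisfies (RC). -/
def HRC (K : Finset (Finset V)) : Prop :=
  ∀ σ ∈ K, RC (lk σ K)

/-- `K` is shellable: there is a total order of its facets such that each facet
meets the union of the previous ones in a pure complex of codimension one. -/
def Shellable (K : Finset (Finset V)) : Prop :=
  ∃ L : List (Finset V), L.Nodup ∧ L.toFinset = facets K ∧
    ∀ i : ℕ, (hi : i < L.length) → 1 ≤ i →
      PureDim ((L.get ⟨i, hi⟩).powerset ∩ ((L.take i).map Finset.powerset).foldr (· ∪ ·) ∅)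
        (((L.get ⟨i, hi⟩).card : ℤ) - 2)

/-- Vertex decomposability (Provan–Billera) of a pure complex. -/
inductive VD : Finset (Finset V) → Prop
  | simplex (σ : Finset V) : VD σ.powerset
  | shed (K : Finset (Finset V)) (v : V) (hv : {v} ∈ K)
      (hdel : PureDim (deleteV v K) (dim K)) (hVDdel : VD (deleteV v K))
      (hlk : PureDim (lk {v} K) (dim K - 1)) (hVDlk : VD (lk {v} K)) : VD K

/-- `L` is a shedding order of `K` (a total order on `V(K)`, given as a
duplicate-free list, witnessing vertex decomposability; once a simplex is
reached, an arbitrary order of its vertices qualifies). -/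
inductive SheddingOrder : List V → Finset (Finset V) → Prop
  | simplex (σ : Finset V) (L : List V) (hnd : L.Nodup) (hfin : L.toFinset = σ) :
      SheddingOrder L σ.powerset
  | cons (v : V) (L : List V) (K : Finset (Finset V)) (hv : {v} ∈ K) (hvL : v ∉ L)
      (hcov : insert v L.toFinset = verts K)
      (hdel : PureDim (deleteV v K) (dim K))
      (hrest : SheddingOrder L (deleteV v K))
      (hlk : PureDim (lk {v} K) (dim K - 1)) (hVDlk : VD (lk {v} K)) :
      SheddingOrder (v :: L) K

/-- `W` induces a star partition of `X`: the stars of the vertices of `W`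
cover `X` and no two distinct vertices of `W` lie in a common face. -/
def StarPartition (W : Finset V) (X : Finset (Finset V)) : Prop :=
  (∀ σ ∈ X, ∃ w ∈ W, σ ∪ {w} ∈ X) ∧
    ∀ w₁ ∈ W, ∀ w₂ ∈ W, w₁ ≠ w₂ → ¬∃ σ ∈ X, w₁ ∈ σ ∧ w₂ ∈ σ

/-- The overlap `O_X(x, W') = lk(x,X) ∩ st(W',X)`. -/
def overlap (X : Finset (Finset V)) (x : V) (W' : Finset V) : Finset (Finset V) :=
  lk {x} X ∩ starSet W' X

/-- Star decomposability of the pair `(X, X₀)`.  The total order on the set `W`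
inducing the star partition is encoded as a duplicate-free list `L` (earlier in
the list = smaller in the order). -/
inductive StarDec : Finset (Finset V) → Finset V → Prop
  | base : StarDec ({∅} : Finset (Finset V)) (∅ : Finset V)
  | step (X : Finset (Finset V)) (X₀ : Finset V) (k : ℤ) (hk : 0 ≤ k) (hpure : PureDim X k)
      (L : List V) (hne : L ≠ []) (hnd : L.Nodup) (hsub : L.toFinset ⊆ verts X)
      (hsp : StarPartition L.toFinset X)
      (horder : ∃ i < L.length, X₀ = (L.drop i).toFinset)
      (U : ℕ → Finset V)
      (hUne : ∀ i, i + 1 < L.length → (U i).Nonempty)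
      (hUsub : ∀ i, (hi : i + 1 < L.length) →
        U i ⊆ verts (lk {L.get ⟨i, Nat.lt_of_succ_lt hi⟩} X))
      (hUst : ∀ i, (hi : i + 1 < L.length) →
        starSet (U i) (lk {L.get ⟨i, Nat.lt_of_succ_lt hi⟩} X) =
          overlap X (L.get ⟨i, Nat.lt_of_succ_lt hi⟩) ((L.drop (i + 1)).toFinset))
      (hlink : ∀ i, (hi : i + 1 < L.length) →
        StarDec (lk {L.get ⟨i, Nat.lt_of_succ_lt hi⟩} X) (U i))
      (Ulast : Finset V)
      (hlast : StarDec (lk {L.getLast hne} X) Ulast) :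
      StarDec X X₀

/-- The order encoded by the list `L` induces a star decomposition of `(X, X₀)`. -/
def InducesStarDecomp (L : List V) (X : Finset (Finset V)) (X₀ : Finset V) : Prop :=
  (L = [] ∧ X = ({∅} : Finset (Finset V)) ∧ X₀ = ∅) ∨
  ∃ hne : L ≠ [], L.Nodup ∧ StarPartition L.toFinset X ∧
    (∃ i < L.length, X₀ = (L.drop i).toFinset) ∧
    (∀ i, (hi : i + 1 < L.length) →
      ∃ U : Finset V, U.Nonempty ∧ U ⊆ verts (lk {L.get ⟨i, Nat.lt_of_succ_lt hi⟩} X) ∧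
        starSet U (lk {L.get ⟨i, Nat.lt_of_succ_lt hi⟩} X) =
          overlap X (L.get ⟨i, Nat.lt_of_succ_lt hi⟩) ((L.drop (i + 1)).toFinset) ∧
        StarDec (lk {L.get ⟨i, Nat.lt_of_succ_lt hi⟩} X) U) ∧
    (∃ U : Finset V, StarDec (lk {L.getLast hne} X) U)

/-- Star decomposability *in vertices* of the pair `(sd Y, Y₀)`; the data is the
underlying complex `Y` together with `Y₀ ⊆ V(Y)`.  The total order on `V(Y)` is
encoded as a duplicate-free list `L`. -/
inductive StarDecV : Finset (Finset V) → Finset V → Prop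
  | base : StarDecV ({∅} : Finset (Finset V)) (∅ : Finset V)
  | step (Y : Finset (Finset V)) (Y₀ : Finset V) (k : ℤ) (hk : 0 ≤ k) (hpure : PureDim Y k)
      (L : List V) (hne : L ≠ []) (hnd : L.Nodup) (hV : L.toFinset = verts Y)
      (horder : ∃ i < L.length, Y₀ = (L.drop i).toFinset)
      (hlink : ∀ i, (hi : i + 1 < L.length) →
        StarDecV (lk {L.get ⟨i, Nat.lt_of_succ_lt hi⟩} Y)
          (verts (lk {L.get ⟨i, Nat.lt_of_succ_lt hi⟩} Y) ∩ (L.drop (i + 1)).toFinset))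
      (hlast : StarDecV (lk {L.getLast hne} Y) (verts (lk {L.getLast hne} Y))) :
      StarDecV Y Y₀

/-- The order encoded by the list `L` induces a star decomposition of
`(sd Y, Y₀)` in vertices. -/
def InducesStarDecompV (L : List V) (Y : Finset (Finset V)) (Y₀ : Finset V) : Prop :=
  (L = [] ∧ Y = ({∅} : Finset (Finset V)) ∧ Y₀ = ∅) ∨
  ∃ hne : L ≠ [], L.Nodup ∧ L.toFinset = verts Y ∧
    (∃ i < L.length, Y₀ = (L.drop i).toFinset) ∧
    (∀ i, (hi : i + 1 < L.length) →
      StarDecV (lk {L.get ⟨i, Nat.lt_of_succ_lt hi⟩} Y)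
        (verts (lk {L.get ⟨i, Nat.lt_of_succ_lt hi⟩} Y) ∩ (L.drop (i + 1)).toFinset)) ∧
    StarDecV (lk {L.getLast hne} Y) (verts (lk {L.getLast hne} Y))

/-- Simplicial isomorphism between two complexes. -/
def SimpIso {α β : Type*} [DecidableEq α] [DecidableEq β]
    (K : Finset (Finset α)) (L : Finset (Finset β)) : Prop :=
  ∃ f : α → β, Set.InjOn f ↑(verts K) ∧ K.image (fun σ => σ.image f) = L

/-- Simplicial isomorphism of pairs (complex, subcomplex). -/
def SimpIsoPair {α β : Type*} [DecidableEq α] [DecidableEq β]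
    (K K₁ : Finset (Finset α)) (L L₁ : Finset (Finset β)) : Prop :=
  ∃ f : α → β, Set.InjOn f ↑(verts K) ∧ K.image (fun σ => σ.image f) = L ∧
    K₁.image (fun σ => σ.image f) = L₁

/-! Reduced simplicial homology (the empty face is included, so the chain
complex below, graded by cardinality of faces, computes *reduced* homology). -/

/-- Faces of `K` of cardinality `n`. -/
def kfaces (K : Finset (Finset V)) (n : ℕ) : Finset (Finset V) :=
  K.filter fun σ => σ.card = n

/-- The mod 2 boundary operator, from chains on faces of cardinality `n+1`
to chains on faces of cardinality `n`. -/
noncomputable def bdry2 (K : Finset (Finset V)) (n : ℕ) :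
    (↥(kfaces K (n + 1)) → ZMod 2) →ₗ[ZMod 2] (↥(kfaces K n) → ZMod 2) :=
  Matrix.mulVecLin (Matrix.of fun (τ : ↥(kfaces K n)) (σ : ↥(kfaces K (n + 1))) =>
    if (τ : Finset V) ⊆ (σ : Finset V) then (1 : ZMod 2) else 0)

/-- The reduced Betti number `β̃ᵢ(K; ℤ₂)`. -/
noncomputable def betti2 (K : Finset (Finset V)) (i : ℕ) : ℕ :=
  Module.finrank (ZMod 2) (LinearMap.ker (bdry2 K i)) -
    Module.finrank (ZMod 2) (LinearMap.range (bdry2 K (i + 1)))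

/-- Signed incidence coefficient (with respect to an arbitrary, but fixed,
linear order on the vertices; reduced homology does not depend on the choice). -/
noncomputable def coeffInt (σ τ : Finset V) : ℤ :=
  letI : LinearOrder V := IsWellOrder.linearOrder WellOrderingRel
  (σ \ τ).sum fun v => (-1 : ℤ) ^ ((σ.filter fun u => u < v).card)

/-- The integral boundary operator, from chains on faces of cardinality `n+1`
to chains on faces of cardinality `n`. -/
noncomputable def bdryZ (K : Finset (Finset V)) (n : ℕ) :
    (↥(kfaces K (n + 1)) → ℤ) →ₗ[ℤ] (↥(kfaces K n) → ℤ) :=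
  Matrix.mulVecLin (Matrix.of fun (τ : ↥(kfaces K n)) (σ : ↥(kfaces K (n + 1))) =>
    if (τ : Finset V) ⊆ (σ : Finset V) then coeffInt (σ : Finset V) (τ : Finset V) else 0)

/-- `K` has trivial reduced (integral) homology: `H̃ₙ(K; ℤ) = 0` for all
`n ≥ -1`. -/
def TrivialRedHomology (K : Finset (Finset V)) : Prop :=
  K.Nonempty ∧ LinearMap.range (bdryZ K 0) = ⊤ ∧
    ∀ n : ℕ, LinearMap.ker (bdryZ K n) = LinearMap.range (bdryZ K (n + 1))

/-- Reduced Euler characteristic. -/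
def redEuler (K : Finset (Finset V)) : ℤ :=
  (∑ σ ∈ K.filter fun σ => σ ≠ ∅, (-1 : ℤ) ^ (σ.card - 1)) - 1


section Helpers

set_option linter.unusedSectionVars false

theorem mem_verts {K : Finset (Finset V)} {v : V} : v ∈ verts K ↔ ∃ σ ∈ K, v ∈ σ := by
  simp [verts, Finset.mem_sup]

theorem mem_lk {K : Finset (Finset V)} {w : V} {τ : Finset V} :
    τ ∈ lk {w} K ↔ w ∉ τ ∧ insert w τ ∈ K := by
  simp only [lk, mem_image, mem_filter, singleton_subset_iff]
  constructor
  · rintro ⟨σ, ⟨h1, h2⟩, rfl⟩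
    refine ⟨by simp, ?_⟩
    have : insert w (σ \ {w}) = σ := by
      ext a; by_cases h : a = w <;> simp [h, h2]
    rwa [this]
  · rintro ⟨h1, h2⟩
    refine ⟨insert w τ, ⟨h2, by simp⟩, ?_⟩
    ext a; by_cases h : a = w <;> simp [h, h1]

theorem IsCplx.lk {K : Finset (Finset V)} (hK : IsCplx K) (w : V) : IsCplx (lk {w} K) := by
  intro σ hσ τ hτ
  rw [mem_lk] at hσ ⊢
  exact ⟨fun h => hσ.1 (hτ h), hK _ hσ.2 _ (insert_subset_insert _ hτ)⟩

theorem verts_lk_subset {K : Finset (Finset V)} {w : V} : verts (lk {w} K) ⊆ verts K := by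
  intro v hv
  obtain ⟨σ, hσ, h⟩ := mem_verts.1 hv
  exact mem_verts.2 ⟨_, (mem_lk.1 hσ).2, mem_insert_of_mem h⟩

theorem not_mem_verts_lk {K : Finset (Finset V)} {w : V} : w ∉ verts (lk {w} K) := by
  intro hv
  obtain ⟨σ, hσ, h⟩ := mem_verts.1 hv
  exact (mem_lk.1 hσ).1 h

theorem IsCplx.empty_mem {K : Finset (Finset V)} (hK : IsCplx K) (h : K.Nonempty) : ∅ ∈ K := by
  obtain ⟨σ, hσ⟩ := h
  exact hK _ hσ _ (empty_subset _)

theorem IsCplx.singleton_mem {K : Finset (Finset V)} (hK : IsCplx K) {v : V} (h : v ∈ verts K) :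
    {v} ∈ K := by
  obtain ⟨σ, hσ, h⟩ := mem_verts.1 h
  exact hK _ hσ _ (by simpa using h)

/-- Natural-number version of purity: all facets have cardinality `n`. -/
def PureN (K : Finset (Finset V)) (n : ℕ) : Prop :=
  K.Nonempty ∧ (∀ σ ∈ K, σ.card ≤ n) ∧ ∀ σ ∈ K, ∃ τ ∈ K, σ ⊆ τ ∧ τ.card = n

theorem pureN_iff {K : Finset (Finset V)} {n : ℕ} : PureN K n ↔ PureDim K ((n : ℤ) - 1) := by
  simp [PureN, PureDim]

theorem PureDim.toN {K : Finset (Finset V)} {d : ℤ} (h : PureDim K d) (hd : -1 ≤ d) :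
    PureN K (d + 1).toNat := by
  rw [pureN_iff]
  rw [Int.toNat_of_nonneg (by omega)]
  simpa using h

theorem PureN.unique {K : Finset (Finset V)} {n m : ℕ} (h : PureN K n) (h' : PureN K m) :
    n = m := by
  obtain ⟨σ, hσ⟩ := h.1
  obtain ⟨τ, h1, _, h2⟩ := h.2.2 σ hσ
  obtain ⟨τ', h3, _, h4⟩ := h'.2.2 σ hσ
  have := h.2.1 _ h3
  have := h'.2.1 _ h1
  omega

theorem PureN.eq_of_zero {K : Finset (Finset V)} (h : PureN K 0) : K = {∅} := by
  ext σ
  have key : ∀ σ ∈ K, σ = ∅ := fun σ hσ => by simpa using h.2.1 σ hσ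
  constructor
  · intro hσ; simp [key σ hσ]
  · intro hσ
    obtain ⟨τ, hτ⟩ := h.1
    rw [mem_singleton.1 hσ, ← key τ hτ]; exact hτ

theorem pureN_single : PureN ({∅} : Finset (Finset V)) 0 := by
  simp [PureN]

theorem PureN.lk {K : Finset (Finset V)} {n : ℕ} (h : PureN K (n + 1)) (hK : IsCplx K) {w : V}
    (hw : w ∈ verts K) : PureN (lk {w} K) n := by
  refine ⟨⟨∅, mem_lk.2 ⟨by simp, ?_⟩⟩, ?_, ?_⟩
  · exact hK.singleton_mem hw
  · intro σ hσ
    rw [mem_lk] at hσ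
    have := h.2.1 _ hσ.2
    rw [card_insert_of_notMem hσ.1] at this
    omega
  · intro σ hσ
    rw [mem_lk] at hσ
    obtain ⟨τ, h1, h2, h3⟩ := h.2.2 _ hσ.2
    have hwτ : w ∈ τ := h2 (mem_insert_self _ _)
    refine ⟨τ.erase w, mem_lk.2 ⟨by simp, by rwa [insert_erase hwτ]⟩, ?_, ?_⟩
    · intro a ha
      exact mem_erase.2 ⟨fun e => hσ.1 (e ▸ ha), h2 (mem_insert_of_mem ha)⟩
    · rw [card_erase_of_mem hwτ, h3]; simp

/-- Rank-function form of "the order induces a star decomposition in vertices". -/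
def Ind (r : V → ℕ) (Y : Finset (Finset V)) (Y₀ : Finset V) : Prop :=
  Set.InjOn r (verts Y) ∧ Y₀ ⊆ verts Y ∧ Y₀.Nonempty ∧
  (∀ a ∈ Y₀, ∀ b ∈ verts Y, r a ≤ r b → b ∈ Y₀) ∧
  (∀ w ∈ verts Y, (∃ w' ∈ verts Y, r w < r w') →
    StarDecV (lk {w} Y) ((verts (lk {w} Y)).filter fun v => r w < r v)) ∧
  (∀ w ∈ verts Y, (∀ w' ∈ verts Y, r w' ≤ r w) → StarDecV (lk {w} Y) (verts (lk {w} Y)))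

theorem Ind.change {r : V → ℕ} {Y : Finset (Finset V)} {Y₀ Y₁ : Finset V} (h : Ind r Y Y₀)
    (h1 : Y₁ ⊆ verts Y) (h2 : Y₁.Nonempty) (h3 : ∀ a ∈ Y₁, ∀ b ∈ verts Y, r a ≤ r b → b ∈ Y₁) :
    Ind r Y Y₁ :=
  ⟨h.1, h1, h2, h3, h.2.2.2.2⟩

theorem mem_drop_iff {L : List V} {r : V → ℕ} (hp : L.Pairwise (fun a b => r a < r b))
    (i : ℕ) (hi : i < L.length) (v : V) : v ∈ L.drop i ↔ v ∈ L ∧ r (L[i]) ≤ r v := by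
  have hm : ∀ a b (ha : a < L.length) (hb : b < L.length), a < b → r L[a] < r L[b] :=
    fun a b ha hb hab => List.pairwise_iff_getElem.1 hp a b ha hb hab
  rw [List.mem_iff_getElem (l := L.drop i), List.mem_iff_getElem]
  constructor
  · rintro ⟨j, hj, rfl⟩
    simp only [List.length_drop] at hj
    refine ⟨⟨i + j, by omega, by simp⟩, ?_⟩
    rw [List.getElem_drop]
    rcases Nat.eq_zero_or_pos j with h | h
    · subst h; simp
    · exact (hm _ _ hi (by omega) (by omega)).le
  · rintro ⟨⟨j, hj, rfl⟩, h⟩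
    have : i ≤ j := by
      by_contra hc
      have := hm j i hj hi (by omega)
      omega
    refine ⟨j - i, by simp; omega, ?_⟩
    rw [List.getElem_drop]
    congr 1; omega

theorem mem_drop_succ_iff {L : List V} {r : V → ℕ} (hp : L.Pairwise (fun a b => r a < r b))
    (i : ℕ) (hi : i < L.length) (v : V) : v ∈ L.drop (i + 1) ↔ v ∈ L ∧ r (L[i]) < r v := by
  have h1 := mem_drop_iff hp i hi v
  have hm : ∀ a b (ha : a < L.length) (hb : b < L.length), a < b → r L[a] < r L[b] :=
    fun a b ha hb hab => List.pairwise_iff_getElem.1 hp a b ha hb hab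
  constructor
  · intro h
    obtain ⟨j, hj, rfl⟩ := List.mem_iff_getElem.1 h
    simp only [List.length_drop] at hj
    rw [List.getElem_drop]
    exact ⟨List.getElem_mem _, hm _ _ hi (by omega) (by omega)⟩
  · rintro ⟨h, h2⟩
    have h3 := h1.2 ⟨h, h2.le⟩
    rw [List.drop_eq_getElem_cons hi] at h3
    rcases List.mem_cons.1 h3 with h4 | h4
    · subst h4; omega
    · exact h4

/-- List form of the order, for nonempty lists. -/
def IndL (L : List V) (Y : Finset (Finset V)) (Y₀ : Finset V) : Prop :=
  ∃ hne : L ≠ [], L.Nodup ∧ L.toFinset = verts Y ∧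
    (∃ i < L.length, Y₀ = (L.drop i).toFinset) ∧
    (∀ i, (hi : i + 1 < L.length) →
      StarDecV (lk {L.get ⟨i, Nat.lt_of_succ_lt hi⟩} Y)
        (verts (lk {L.get ⟨i, Nat.lt_of_succ_lt hi⟩} Y) ∩ (L.drop (i + 1)).toFinset)) ∧
    StarDecV (lk {L.getLast hne} Y) (verts (lk {L.getLast hne} Y))

theorem indL_iff {L : List V} {r : V → ℕ} {Y : Finset (Finset V)} {Y₀ : Finset V}
    (hp : L.Pairwise (fun a b => r a < r b)) (hV : L.toFinset = verts Y) :
    IndL L Y Y₀ ↔ Ind r Y Y₀ := by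
  have hm : ∀ a b (ha : a < L.length) (hb : b < L.length), a < b → r L[a] < r L[b] :=
    fun a b ha hb hab => List.pairwise_iff_getElem.1 hp a b ha hb hab
  have hle : ∀ a b (ha : a < L.length) (hb : b < L.length), a ≤ b → r L[a] ≤ r L[b] := by
    intro a b ha hb hab
    rcases hab.eq_or_lt with h | h
    · subst h; exact le_rfl
    · exact (hm a b ha hb h).le
  have hv : ∀ v, v ∈ verts Y ↔ v ∈ L := fun v => by rw [← hV]; simp
  have hnd : L.Nodup := hp.imp (fun {a b} h e => by subst e; exact lt_irrefl _ h)
  have hset : ∀ i (hi : i < L.length), verts (lk {L[i]} Y) ∩ (L.drop (i + 1)).toFinset =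
      (verts (lk {L[i]} Y)).filter fun v => r L[i] < r v := by
    intro i hi
    ext v
    simp only [mem_inter, List.mem_toFinset, mem_filter, mem_drop_succ_iff hp i hi]
    constructor
    · rintro ⟨h1, h2, h3⟩; exact ⟨h1, h3⟩
    · rintro ⟨h1, h3⟩; exact ⟨h1, (hv v).1 (verts_lk_subset h1), h3⟩
  have hinj : Set.InjOn r (verts Y) := by
    intro a ha b hb hab
    obtain ⟨i, hi, rfl⟩ := List.mem_iff_getElem.1 ((hv a).1 ha)
    obtain ⟨j, hj, rfl⟩ := List.mem_iff_getElem.1 ((hv b).1 hb)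
    rcases lt_trichotomy i j with h | h | h
    · have := hm i j hi hj h; omega
    · subst h; rfl
    · have := hm j i hj hi h; omega
  constructor
  · rintro ⟨hne, _, _, ⟨i, hi, rfl⟩, hl, hlast⟩
    refine ⟨hinj, ?_, ⟨L[i], ?_⟩, ?_, ?_, ?_⟩
    · intro v hv'
      rw [List.mem_toFinset, mem_drop_iff hp i hi] at hv'
      exact (hv v).2 hv'.1
    · rw [List.mem_toFinset, mem_drop_iff hp i hi]; simp
    · intro a ha b hb hab
      rw [List.mem_toFinset, mem_drop_iff hp i hi] at ha ⊢
      exact ⟨(hv b).1 hb, ha.2.trans hab⟩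
    · rintro w hw ⟨w', hw', hlt⟩
      obtain ⟨i, hi, rfl⟩ := List.mem_iff_getElem.1 ((hv w).1 hw)
      obtain ⟨j, hj, rfl⟩ := List.mem_iff_getElem.1 ((hv w').1 hw')
      have hij : i < j := by
        by_contra hc
        have := hle j i hj hi (by omega)
        omega
      have := hl i (by omega)
      rw [← hset i hi]
      exact this
    · intro w hw hmax
      obtain ⟨i, hi, rfl⟩ := List.mem_iff_getElem.1 ((hv w).1 hw)
      have : i = L.length - 1 := by
        by_contra hc
        have := hm i (L.length - 1) hi (by omega) (by omega)
        have := hmax _ ((hv _).2 (List.getElem_mem (l := L) (n := L.length - 1) (by omega)))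
        omega
      subst this
      rw [List.getLast_eq_getElem] at hlast
      exact hlast
  · rintro ⟨_, h1, h2, h3, h4, h5⟩
    have hne : L ≠ [] := by
      rintro rfl
      obtain ⟨v, hv'⟩ := h2
      simpa using (hv v).1 (h1 hv')
    have hpos : 0 < L.length := List.length_pos_iff.2 hne
    refine ⟨hne, hnd, hV, ?_, ?_, ?_⟩
    · obtain ⟨m, hm1, hm2⟩ := Finset.exists_min_image Y₀ r h2
      obtain ⟨i, hi, rfl⟩ := List.mem_iff_getElem.1 ((hv m).1 (h1 hm1))
      refine ⟨i, hi, ?_⟩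
      ext v
      rw [List.mem_toFinset, mem_drop_iff hp i hi]
      constructor
      · intro h; exact ⟨(hv v).1 (h1 h), hm2 v h⟩
      · rintro ⟨h, h'⟩; exact h3 _ hm1 _ ((hv v).2 h) h'
    · intro i hi
      have hi' : i < L.length := by omega
      have := h4 L[i] ((hv _).2 (List.getElem_mem _)) ⟨L[i+1], (hv _).2 (List.getElem_mem _),
        hm _ _ _ _ (by omega)⟩
      rw [← hset i hi'] at this
      exact this
    · have := h5 (L.getLast hne) ((hv _).2 (List.getLast_mem _)) (by
        intro w hw
        obtain ⟨i, hi, rfl⟩ := List.mem_iff_getElem.1 ((hv w).1 hw)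
        rw [List.getLast_eq_getElem]
        exact hle _ _ _ _ (by omega))
      exact this

theorem exists_list {r : V → ℕ} {S : Finset V} (h : Set.InjOn r S) :
    ∃ L : List V, L.Pairwise (fun a b => r a < r b) ∧ L.toFinset = S := by
  classical
  induction hn : S.card generalizing S with
  | zero => exact ⟨[], by simp, by simpa using (Finset.card_eq_zero.1 hn).symm⟩
  | succ n ih =>
    obtain ⟨m, hm, hmin⟩ := Finset.exists_min_image S r (Finset.card_pos.1 (by omega))
    obtain ⟨L, hL, hL2⟩ := ih (S := S.erase m) (h.mono (by simp))
      (by rw [card_erase_of_mem hm]; omega)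
    refine ⟨m :: L, List.pairwise_cons.2 ⟨?_, hL⟩, ?_⟩
    · intro a ha
      have ha' : a ∈ S.erase m := by rw [← hL2]; simpa using ha
      rw [mem_erase] at ha'
      exact lt_of_le_of_ne (hmin a ha'.2) (fun e => ha'.1 (h ha'.2 hm e.symm))
    · rw [List.toFinset_cons, hL2, insert_erase hm]

theorem pairwise_idxOf {L : List V} (h : L.Nodup) :
    L.Pairwise (fun a b => L.idxOf a < L.idxOf b) := by
  rw [List.pairwise_iff_getElem]
  intro i j hi hj hij
  rw [h.idxOf_getElem, h.idxOf_getElem]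
  exact hij

theorem starDecV_of_ind {Y : Finset (Finset V)} {Y₀ : Finset V} {n : ℕ} {r : V → ℕ}
    (hp : PureN Y (n + 1)) (h : Ind r Y Y₀) : StarDecV Y Y₀ := by
  obtain ⟨L, hL, hL2⟩ := exists_list h.1
  obtain ⟨hne, h1, h2, h3, h4, h5⟩ := (indL_iff hL hL2).2 h
  refine StarDecV.step Y Y₀ n (by omega) ?_ L hne h1 h2 h3 h4 h5
  simpa using pureN_iff.1 hp

theorem starDecV_cases {Y : Finset (Finset V)} {Y₀ : Finset V} (h : StarDecV Y Y₀) :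
    (Y = {∅} ∧ Y₀ = ∅) ∨ ∃ n r, PureN Y (n + 1) ∧ Ind r Y Y₀ := by
  cases h with
  | base => exact Or.inl ⟨rfl, rfl⟩
  | step _ _ k hk hpure L hne hnd hV horder hlink hlast =>
    right
    refine ⟨k.toNat, fun v => L.idxOf v, ?_, ?_⟩
    · have := hpure.toN (by omega)
      have e : (k + 1).toNat = k.toNat + 1 := by omega
      rwa [e] at this
    · exact (indL_iff (pairwise_idxOf hnd) hV).1 ⟨hne, hnd, hV, horder, hlink, hlast⟩

theorem starDecV_pure {Y : Finset (Finset V)} {Y₀ : Finset V} (h : StarDecV Y Y₀) :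
    ∃ n, PureN Y n := by
  rcases starDecV_cases h with ⟨rfl, _⟩ | ⟨n, r, h, _⟩
  · exact ⟨0, pureN_single⟩
  · exact ⟨_, h⟩

/-- Euler-type sum of the induced subcomplex on `S`. -/
def eul (K : Finset (Finset V)) (S : Finset V) : ℤ :=
  ∑ σ ∈ K.filter (fun σ => σ ⊆ S), (-1 : ℤ) ^ σ.card

theorem eul_erase {K : Finset (Finset V)} {S : Finset V} {y : V} (hy : y ∈ S) :
    eul K S = eul K (S.erase y) - eul (lk {y} K) (S.erase y) := by
  unfold eul
  rw [← Finset.sum_filter_add_sum_filter_not (K.filter (fun σ => σ ⊆ S)) (fun σ => y ∉ σ),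
    sub_eq_add_neg, ← Finset.sum_neg_distrib]
  congr 1
  · apply Finset.sum_congr _ (fun _ _ => rfl)
    ext σ
    simp only [mem_filter, subset_erase]
    tauto
  · symm
    apply Finset.sum_bij (fun σ _ => insert y σ)
    · intro σ hσ
      simp only [mem_filter, mem_lk, subset_erase] at hσ ⊢
      exact ⟨⟨hσ.1.2, insert_subset hy hσ.2.1⟩, by simp⟩
    · intro a ha b hb hab
      simp only [mem_filter, mem_lk] at ha hb
      rw [← erase_insert ha.1.1, ← erase_insert hb.1.1, hab]
    · intro σ hσ
      simp only [mem_filter, not_not] at hσ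
      refine ⟨σ.erase y, ?_, insert_erase hσ.2⟩
      simp only [mem_filter, mem_lk, insert_erase hσ.2]
      exact ⟨⟨by simp, hσ.1.1⟩, erase_subset_erase _ hσ.1.2⟩
    · intro σ hσ
      simp only [mem_filter, mem_lk] at hσ
      rw [card_insert_of_notMem hσ.1.1]; ring

theorem eul_empty {K : Finset (Finset V)} (hK : ∅ ∈ K) : eul K ∅ = 1 := by
  unfold eul
  have : K.filter (fun σ => σ ⊆ ∅) = {∅} := by
    ext σ; simp only [mem_filter, subset_empty, mem_singleton]
    constructor
    · exact fun h => h.2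
    · rintro rfl; exact ⟨hK, rfl⟩
  rw [this]; simp

theorem eul_inter {K : Finset (Finset V)} {S T : Finset V}
    (h : ∀ v ∈ verts K, v ∈ S ↔ v ∈ T) : eul K S = eul K T := by
  unfold eul
  apply Finset.sum_congr _ (fun _ _ => rfl)
  ext σ
  simp only [mem_filter, and_congr_right_iff]
  intro hσ
  constructor
  · intro hs v hv; exact (h v (mem_verts.2 ⟨σ, hσ, hv⟩)).1 (hs hv)
  · intro hs v hv; exact (h v (mem_verts.2 ⟨σ, hσ, hv⟩)).2 (hs hv)

/-- Telescoping: nonnegativity, and vanishing of all the summands. -/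
theorem eul_tele {K : Finset (Finset V)} (hK : IsCplx K) {n : ℕ} {r : V → ℕ}
    (hinj : Set.InjOn r (verts K))
    (hl : ∀ w ∈ verts K, (∃ w' ∈ verts K, r w < r w') →
      0 ≤ (-1) ^ n * eul (lk {w} K) ((verts (lk {w} K)).filter fun v => r w < r v))
    (S : Finset V) (hS : S ⊆ verts K) (hne : S.Nonempty)
    (hup : ∀ a ∈ S, ∀ b ∈ verts K, r a ≤ r b → b ∈ S) :
    0 ≤ (-1) ^ (n + 1) * eul K S ∧ (eul K S = 0 → ∀ w ∈ S, (∃ w' ∈ verts K, r w < r w') →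
      eul (lk {w} K) ((verts (lk {w} K)).filter fun v => r w < r v) = 0) := by
  induction hn : S.card generalizing S with
  | zero => exact absurd hn (Finset.card_pos.2 hne).ne'
  | succ m ih =>
    obtain ⟨y, hy, hmin⟩ := Finset.exists_min_image S r hne
    have hrec := eul_erase (K := K) hy
    have hmem : ∀ v, v ∈ S.erase y ↔ v ∈ verts K ∧ r y < r v := by
      intro v
      rw [mem_erase]
      constructor
      · rintro ⟨h1, h2⟩
        exact ⟨hS h2, lt_of_le_of_ne (hmin v h2) fun e => h1 (hinj (hS h2) (hS hy) e.symm)⟩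
      · rintro ⟨h1, h2⟩
        exact ⟨fun e => by subst e; exact lt_irrefl _ h2, hup y hy v h1 h2.le⟩
    have hlk : eul (lk {y} K) (S.erase y) =
        eul (lk {y} K) ((verts (lk {y} K)).filter fun v => r y < r v) := by
      apply eul_inter
      intro v hv
      rw [hmem, mem_filter]
      exact ⟨fun h => ⟨hv, h.2⟩, fun h => ⟨verts_lk_subset hv, h.2⟩⟩
    rcases (S.erase y).eq_empty_or_nonempty with he | he
    · have h0 : eul K S = 0 := by
        rw [hrec, he, eul_empty (hK.empty_mem ⟨_, hK.singleton_mem (hS hy)⟩),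
          eul_empty (mem_lk.2 ⟨by simp, hK.singleton_mem (hS hy)⟩)]
        simp
      refine ⟨by rw [h0]; simp, ?_⟩
      rintro _ w hw ⟨w', hw', hlt⟩
      have : w' ∈ S.erase y := (hmem w').2 ⟨hw', lt_of_le_of_lt (hmin w hw) hlt⟩
      rw [he] at this; simp at this
    · obtain ⟨h1, h2⟩ := ih (S.erase y) ((erase_subset _ _).trans hS) he (by
        intro a ha b hb hab
        rw [hmem] at ha ⊢
        exact ⟨hb, lt_of_lt_of_le ha.2 hab⟩) (by rw [card_erase_of_mem hy]; omega)
      obtain ⟨z, hz⟩ := he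
      have h3 := hl y (hS hy) ⟨z, (hmem z).1 hz⟩
      rw [← hlk] at h3
      have hs : (-1 : ℤ) ^ (n + 1) * eul K S = (-1) ^ (n + 1) * eul K (S.erase y) +
          (-1) ^ n * eul (lk {y} K) (S.erase y) := by
        rw [hrec]; ring
      refine ⟨by rw [hs]; omega, ?_⟩
      intro h0
      rw [h0, mul_zero] at hs
      have e1 : (-1 : ℤ) ^ (n + 1) * eul K (S.erase y) = 0 := by omega
      have e2 : (-1 : ℤ) ^ n * eul (lk {y} K) (S.erase y) = 0 := by omega
      have e1' : eul K (S.erase y) = 0 := by simpa using e1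
      have e2' : eul (lk {y} K) (S.erase y) = 0 := by simpa using e2
      intro w hw hlast
      by_cases hwy : w = y
      · subst hwy; rw [← hlk]; exact e2'
      · exact h2 e1' w (mem_erase.2 ⟨hwy, hw⟩) hlast

theorem eul_nonneg {n : ℕ} : ∀ {K : Finset (Finset V)} {S : Finset V}, IsCplx K → PureN K n →
    StarDecV K S → 0 ≤ (-1) ^ n * eul K S := by
  induction n with
  | zero =>
    intro K S hK hp h
    rcases starDecV_cases h with ⟨rfl, rfl⟩ | ⟨m, r, h, _⟩
    · rw [eul_empty (by simp)]; simp
    · have := hp.unique h; omega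
  | succ n ih =>
    intro K S hK hp h
    rcases starDecV_cases h with ⟨rfl, rfl⟩ | ⟨m, r, h, hI⟩
    · have := hp.unique pureN_single; omega
    · obtain ⟨i1, i2, i3, i4, i5, i6⟩ := hI
      refine (eul_tele hK i1 ?_ S i2 i3 i4).1
      intro w hw hw'
      exact ih (hK.lk w) (hp.lk hK hw) (i5 w hw hw')

theorem eul_link_zero {n : ℕ} {K : Finset (Finset V)} {S : Finset V} {r : V → ℕ} (hK : IsCplx K)
    (hp : PureN K (n + 1)) (h : Ind r K S) (h0 : eul K S = 0) :
    ∀ w ∈ S, (∃ w' ∈ verts K, r w < r w') →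
      eul (lk {w} K) ((verts (lk {w} K)).filter fun v => r w < r v) = 0 := by
  obtain ⟨i1, i2, i3, i4, i5, i6⟩ := h
  refine (eul_tele (n := n) hK i1 ?_ S i2 i3 i4).2 h0
  intro w hw hw'
  exact eul_nonneg (hK.lk w) (hp.lk hK hw) (i5 w hw hw')

/-- Internal join. -/
def jn (X Y : Finset (Finset V)) : Finset (Finset V) := (X ×ˢ Y).image fun p => p.1 ∪ p.2

theorem mem_jn {X Y : Finset (Finset V)} {ρ : Finset V} :
    ρ ∈ jn X Y ↔ ∃ σ ∈ X, ∃ τ ∈ Y, σ ∪ τ = ρ := by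
  simp only [jn, mem_image, mem_product, Prod.exists]
  constructor
  · rintro ⟨a, b, ⟨h1, h2⟩, h⟩; exact ⟨a, h1, b, h2, h⟩
  · rintro ⟨a, h1, b, h2, h⟩; exact ⟨a, b, ⟨h1, h2⟩, h⟩

theorem jn_comm (X Y : Finset (Finset V)) : jn X Y = jn Y X := by
  ext ρ
  rw [mem_jn, mem_jn]
  constructor
  · rintro ⟨a, h1, b, h2, h⟩; exact ⟨b, h2, a, h1, by rw [union_comm, h]⟩
  · rintro ⟨a, h1, b, h2, h⟩; exact ⟨b, h2, a, h1, by rw [union_comm, h]⟩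

theorem jn_single (Y : Finset (Finset V)) : jn {∅} Y = Y := by
  ext ρ; simp [mem_jn]

theorem verts_single : verts ({∅} : Finset (Finset V)) = ∅ := by
  simp [verts]

theorem verts_jn {X Y : Finset (Finset V)} (hX : X.Nonempty) (hY : Y.Nonempty) :
    verts (jn X Y) = verts X ∪ verts Y := by
  ext v
  simp only [mem_union, mem_verts, mem_jn]
  constructor
  · rintro ⟨_, ⟨a, h1, b, h2, rfl⟩, h⟩
    rcases mem_union.1 h with h | h
    · exact Or.inl ⟨a, h1, h⟩
    · exact Or.inr ⟨b, h2, h⟩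
  · rintro (⟨a, h1, h⟩ | ⟨b, h1, h⟩)
    · obtain ⟨b, hb⟩ := hY
      exact ⟨_, ⟨a, h1, b, hb, rfl⟩, mem_union_left _ h⟩
    · obtain ⟨a, ha⟩ := hX
      exact ⟨_, ⟨a, ha, b, h1, rfl⟩, mem_union_right _ h⟩

theorem lk_jn_left {X Y : Finset (Finset V)} {x : V} (hx : x ∉ verts Y) :
    lk {x} (jn X Y) = jn (lk {x} X) Y := by
  ext ρ
  rw [mem_lk, mem_jn, mem_jn]
  constructor
  · rintro ⟨h, σ, h1, τ, h2, h3⟩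
    have hτ : x ∉ τ := fun hh => hx (mem_verts.2 ⟨τ, h2, hh⟩)
    have hσ : x ∈ σ := by
      have : x ∈ σ ∪ τ := by rw [h3]; simp
      rcases mem_union.1 this with h | h
      · exact h
      · exact absurd h hτ
    refine ⟨σ.erase x, mem_lk.2 ⟨by simp, by rwa [insert_erase hσ]⟩, τ, h2, ?_⟩
    rw [← erase_insert h, ← h3, erase_union_distrib, erase_eq_of_notMem hτ]
  · rintro ⟨σ, h1, τ, h2, rfl⟩
    have hτ : x ∉ τ := fun hh => hx (mem_verts.2 ⟨τ, h2, hh⟩)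
    rw [mem_lk] at h1
    exact ⟨by simp [h1.1, hτ], insert x σ, h1.2, τ, h2, by rw [insert_union]⟩

theorem lk_jn_right {X Y : Finset (Finset V)} {y : V} (hy : y ∉ verts X) :
    lk {y} (jn X Y) = jn X (lk {y} Y) := by
  rw [jn_comm, lk_jn_left hy, jn_comm]

theorem IsCplx.jn {X Y : Finset (Finset V)} (hX : IsCplx X) (hY : IsCplx Y) :
    IsCplx (jn X Y) := by
  intro ρ hρ ρ' h
  rw [mem_jn] at hρ ⊢
  obtain ⟨σ, h1, τ, h2, rfl⟩ := hρ
  refine ⟨ρ' ∩ σ, hX _ h1 _ inter_subset_right, ρ' ∩ τ, hY _ h2 _ inter_subset_right, ?_⟩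
  rw [← inter_union_distrib_left, inter_eq_left.2 h]

theorem PureN.jn {X Y : Finset (Finset V)} {a b : ℕ} (hX : PureN X a) (hY : PureN Y b)
    (hd : Disjoint (verts X) (verts Y)) : PureN (jn X Y) (a + b) := by
  have hdis : ∀ σ ∈ X, ∀ τ ∈ Y, Disjoint σ τ := by
    intro σ hσ τ hτ
    rw [Finset.disjoint_left] at hd ⊢
    intro v h1 h2
    exact hd (mem_verts.2 ⟨σ, hσ, h1⟩) (mem_verts.2 ⟨τ, hτ, h2⟩)
  refine ⟨?_, ?_, ?_⟩
  · obtain ⟨σ, hσ⟩ := hX.1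
    obtain ⟨τ, hτ⟩ := hY.1
    exact ⟨σ ∪ τ, mem_jn.2 ⟨σ, hσ, τ, hτ, rfl⟩⟩
  · intro ρ hρ
    obtain ⟨σ, h1, τ, h2, rfl⟩ := mem_jn.1 hρ
    rw [card_union_of_disjoint (hdis σ h1 τ h2)]
    have := hX.2.1 σ h1
    have := hY.2.1 τ h2
    omega
  · intro ρ hρ
    obtain ⟨σ, h1, τ, h2, rfl⟩ := mem_jn.1 hρ
    obtain ⟨σ', h3, h4, h5⟩ := hX.2.2 σ h1
    obtain ⟨τ', h6, h7, h8⟩ := hY.2.2 τ h2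
    refine ⟨σ' ∪ τ', mem_jn.2 ⟨σ', h3, τ', h6, rfl⟩, union_subset_union h4 h7, ?_⟩
    rw [card_union_of_disjoint (hdis σ' h3 τ' h6), h5, h8]

/-- The two join statements, for complexes of total size at most `n`. -/
def JoinAB (V : Type*) [DecidableEq V] (n : ℕ) : Prop :=
  ∀ (a b : ℕ) (X Y : Finset (Finset V)), a + b ≤ n → IsCplx X → IsCplx Y → PureN X a → PureN Y b →
    Disjoint (verts X) (verts Y) →
    (∀ X₀ Y₀, StarDecV X X₀ → StarDecV Y Y₀ → StarDecV (jn X Y) (X₀ ∪ Y₀)) ∧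
    (∀ Y₀, StarDecV X (verts X) → StarDecV Y Y₀ → eul Y Y₀ = 0 → StarDecV (jn X Y) Y₀)

theorem core {n a b : ℕ} (hAB : JoinAB V n) {X Y : Finset (Finset V)} (hab : a + b + 1 ≤ n)
    (hX : IsCplx X) (hY : IsCplx Y) (hpX : PureN X (a + 1)) (hpY : PureN Y (b + 1))
    (hd : Disjoint (verts X) (verts Y)) {r : V → ℕ}
    (hinj : Set.InjOn r (verts X ∪ verts Y : Finset V))
    (hIX : Ind r X (verts X)) (hIY : Ind r Y (verts Y)) {xh : V} (hxh : xh ∈ verts X)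
    (hxmax : ∀ x ∈ verts X, r x ≤ r xh) {Y₁ : Finset V}
    (hY₁ : Y₁ = (verts Y).filter fun y => r xh < r y) (hY₁ne : Y₁.Nonempty)
    (he : eul Y Y₁ = 0) {T : Finset V} (hT : T ⊆ verts X ∪ verts Y) (hTne : T.Nonempty)
    (hTup : ∀ t ∈ T, ∀ v ∈ verts X ∪ verts Y, r t ≤ r v → v ∈ T) :
    Ind r (jn X Y) T := by
  have hvj := verts_jn hpX.1 hpY.1
  have hY₁mem : ∀ y, y ∈ Y₁ ↔ y ∈ verts Y ∧ r xh < r y := by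
    intro y; rw [hY₁, mem_filter]
  obtain ⟨y₁, hy₁⟩ := hY₁ne
  have hy₁' := (hY₁mem y₁).1 hy₁
  have hIY₁ : Ind r Y Y₁ := hIY.change (fun y h => ((hY₁mem y).1 h).1) ⟨y₁, hy₁⟩ (by
    intro a ha b hb hab
    rw [hY₁mem] at ha ⊢
    exact ⟨hb, lt_of_lt_of_le ha.2 hab⟩)
  have hSY : ∀ t, (∃ y ∈ verts Y, t < r y) → StarDecV Y ((verts Y).filter fun y => t < r y) := by
    rintro t ⟨y, hy, hty⟩
    refine starDecV_of_ind hpY (hIY.change (filter_subset _ _) ⟨y, mem_filter.2 ⟨hy, hty⟩⟩ ?_)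
    intro a ha b hb hab
    rw [mem_filter] at ha ⊢
    exact ⟨hb, lt_of_lt_of_le ha.2 hab⟩
  have hSX : ∀ t, (∃ y ∈ verts X, t < r y) → StarDecV X ((verts X).filter fun y => t < r y) := by
    rintro t ⟨y, hy, hty⟩
    refine starDecV_of_ind hpX (hIX.change (filter_subset _ _) ⟨y, mem_filter.2 ⟨hy, hty⟩⟩ ?_)
    intro a ha b hb hab
    rw [mem_filter] at ha ⊢
    exact ⟨hb, lt_of_lt_of_le ha.2 hab⟩
  have hdl := Finset.disjoint_left.1 hd
  have hdr := Finset.disjoint_right.1 hd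
  have hXlk : ∀ x ∈ verts X, _ := fun x hx => hAB a (b + 1) (lk {x} X) Y (by omega) (hX.lk x) hY
    (hpX.lk hX hx) hpY (hd.mono_left verts_lk_subset)
  have hYlk : ∀ y ∈ verts Y, _ := fun y hy => hAB (a + 1) b X (lk {y} Y) (by omega) hX (hY.lk y)
    hpX (hpY.lk hY hy) (hd.mono_right verts_lk_subset)
  refine ⟨by rwa [hvj], by rwa [hvj], hTne, by rwa [hvj], ?_, ?_⟩
  · rintro w hw hnl
    rw [hvj, mem_union] at hw
    rcases hw with hw | hw
    · rw [lk_jn_left (hdl hw), verts_jn (hpX.lk hX hw).1 hpY.1, filter_union]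
      by_cases hlast : ∃ w' ∈ verts X, r w < r w'
      · refine (hXlk w hw).1 _ _ (hIX.2.2.2.2.1 w hw hlast) (hSY _ ⟨y₁, hy₁'.1, ?_⟩)
        exact lt_of_le_of_lt (hxmax w hw) hy₁'.2
      · push Not at hlast
        have hwx : w = xh := hIX.1 hw hxh (le_antisymm (hxmax w hw) (hlast xh hxh))
        subst hwx
        have e : ((verts (lk {w} X)).filter fun v => r w < r v) = ∅ := by
          rw [filter_eq_empty_iff]
          intro v hv
          exact not_lt.2 (hxmax v (verts_lk_subset hv))
        rw [e, empty_union, ← hY₁]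
        exact (hXlk w hw).2 _ (hIX.2.2.2.2.2 w hw hlast) (starDecV_of_ind hpY hIY₁) he
    · rw [lk_jn_right (hdr hw), verts_jn hpX.1 (hpY.lk hY hw).1, filter_union]
      by_cases hlast : ∃ w' ∈ verts Y, r w < r w'
      · by_cases hwx : r w < r xh
        · exact (hYlk w hw).1 _ _ (hSX _ ⟨xh, hxh, hwx⟩) (hIY.2.2.2.2.1 w hw hlast)
        · have hne : r w ≠ r xh := fun e => hdr hw (by
            have := hinj (mem_coe.2 (mem_union_right _ hw)) (mem_coe.2 (mem_union_left _ hxh)) e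
            rwa [this])
          have hw1 : w ∈ Y₁ := (hY₁mem w).2 ⟨hw, by omega⟩
          have e : ((verts X).filter fun v => r w < r v) = ∅ := by
            rw [filter_eq_empty_iff]
            intro v hv
            have := hxmax v hv
            omega
          rw [e, empty_union]
          exact (hYlk w hw).2 _ (starDecV_of_ind hpX hIX) (hIY.2.2.2.2.1 w hw hlast)
            (eul_link_zero hY hpY hIY₁ he w hw1 hlast)
      · exfalso
        push Not at hlast
        obtain ⟨v, hv, hlt⟩ := hnl
        rw [hvj, mem_union] at hv
        have h1 := hlast y₁ hy₁'.1
        rcases hv with hv | hv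
        · have := hxmax v hv
          omega
        · have := hlast v hv
          omega
  · intro w hw hmax
    rw [hvj] at hmax
    rw [hvj, mem_union] at hw
    rcases hw with hw | hw
    · have h1 := hmax y₁ (mem_union_right _ hy₁'.1)
      have h2 := hxmax w hw
      omega
    · rw [lk_jn_right (hdr hw), verts_jn hpX.1 (hpY.lk hY hw).1]
      exact (hYlk w hw).1 _ _ (starDecV_of_ind hpX hIX)
        (hIY.2.2.2.2.2 w hw (fun w' h => hmax w' (mem_union_right _ h)))

theorem Ind.congr {r r' : V → ℕ} {Y : Finset (Finset V)} {Y₀ : Finset V} (h : Ind r Y Y₀)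
    (hm : ∀ a ∈ verts Y, ∀ b ∈ verts Y, r a < r b → r' a < r' b) : Ind r' Y Y₀ := by
  obtain ⟨i1, i2, i3, i4, i5, i6⟩ := h
  have hiff : ∀ a ∈ verts Y, ∀ b ∈ verts Y, (r a < r b ↔ r' a < r' b) := by
    intro a ha b hb
    refine ⟨hm a ha b hb, fun h => ?_⟩
    rcases lt_trichotomy (r a) (r b) with h1 | h1 | h1
    · exact h1
    · have := i1 ha hb h1
      subst this; exact absurd h (lt_irrefl _)
    · have := hm b hb a ha h1
      omega
  refine ⟨?_, i2, i3, ?_, ?_, ?_⟩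
  · intro a ha b hb hab
    apply i1 ha hb
    have h1 := hiff a ha b hb
    have h2 := hiff b hb a ha
    omega
  · intro a ha b hb hab
    apply i4 a ha b hb
    have h2 := hiff b hb a (i2 ha)
    omega
  · rintro w hw ⟨w', hw', h⟩
    have e : ((verts (lk {w} Y)).filter fun v => r' w < r' v) =
        (verts (lk {w} Y)).filter fun v => r w < r v := by
      apply filter_congr
      intro v hv
      exact (hiff w hw v (verts_lk_subset hv)).symm
    rw [e]
    exact i5 w hw ⟨w', hw', (hiff w hw w' hw').2 h⟩
  · intro w hw h
    apply i6 w hw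
    intro w' hw'
    have h1 := hiff w hw w' hw'
    have h2 := h w' hw'
    omega

theorem Ind.full {r : V → ℕ} {Y : Finset (Finset V)} {Y₀ : Finset V} (h : Ind r Y Y₀) :
    Ind r Y (verts Y) :=
  h.change (subset_refl _) (h.2.2.1.mono h.2.1) (fun _ _ _ hb _ => hb)

theorem eul_singleton {K : Finset (Finset V)} (hK : IsCplx K) {v : V} (hv : v ∈ verts K) :
    eul K {v} = 0 := by
  rw [eul_erase (K := K) (mem_singleton_self v)]
  simp only [erase_singleton]
  rw [eul_empty (hK.empty_mem ⟨_, hK.singleton_mem hv⟩),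
          eul_empty (mem_lk.2 ⟨by simp, hK.singleton_mem hv⟩)]
  simp

theorem exists_bound (r : V → ℕ) (S : Finset V) : ∃ N, ∀ v ∈ S, r v < N :=
  ⟨S.sup r + 1, fun _ hv => Nat.lt_succ_of_le (Finset.le_sup (f := r) hv)⟩

theorem joinAB (n : ℕ) : JoinAB V n := by
  induction n with
  | zero =>
    intro a b X Y hab hX hY hpX hpY hd
    obtain rfl : a = 0 := by omega
    have := hpX.eq_of_zero
    subst this
    rw [jn_single]
    refine ⟨?_, fun _ _ h _ => h⟩
    intro X₀ Y₀ h1 h2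
    rcases starDecV_cases h1 with ⟨_, rfl⟩ | ⟨m, r, h, _⟩
    · rwa [empty_union]
    · have := hpX.unique h; omega
  | succ n ih =>
    intro a b X Y hab hX hY hpX hpY hd
    rcases a with _ | a
    · have := hpX.eq_of_zero
      subst this
      rw [jn_single]
      refine ⟨?_, fun _ _ h _ => h⟩
      intro X₀ Y₀ h1 h2
      rcases starDecV_cases h1 with ⟨_, rfl⟩ | ⟨m, r, h, _⟩
      · rwa [empty_union]
      · have := hpX.unique h; omega
    rcases b with _ | b
    · have := hpY.eq_of_zero
      subst this
      rw [jn_comm, jn_single]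
      constructor
      · intro X₀ Y₀ h1 h2
        rcases starDecV_cases h2 with ⟨_, rfl⟩ | ⟨m, r, h, _⟩
        · rwa [union_empty]
        · have := hpY.unique h; omega
      · intro Y₀ h1 h2 h3
        rcases starDecV_cases h2 with ⟨_, rfl⟩ | ⟨m, r, h, _⟩
        · rw [eul_empty (by simp)] at h3; omega
        · have := hpY.unique h; omega
    have hdl := Finset.disjoint_left.1 hd
    have hdr := Finset.disjoint_right.1 hd
    have hpJ := hpX.jn hpY hd
    constructor
    · intro X₀ Y₀ h1 h2
      rcases starDecV_cases h1 with ⟨rfl, rfl⟩ | ⟨_, rX, _, hIX⟩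
      · have := hpX.unique pureN_single; omega
      rcases starDecV_cases h2 with ⟨rfl, rfl⟩ | ⟨_, rY, _, hIY⟩
      · have := hpY.unique pureN_single; omega
      obtain ⟨N1, hN1⟩ := exists_bound rX (verts X)
      obtain ⟨N2, hN2⟩ := exists_bound rY (verts Y)
      set N := N1 + N2 with hN
      obtain ⟨yh, hyh, hymax⟩ := Finset.exists_max_image (verts Y) rY (hIY.2.2.1.mono hIY.2.1)
      obtain ⟨xh, hxh, hxmax⟩ := Finset.exists_max_image (verts X) rX (hIX.2.2.1.mono hIX.2.1)
      have hxh0 : xh ∈ X₀ := by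
        obtain ⟨x, hx⟩ := hIX.2.2.1
        exact hIX.2.2.2.1 x hx xh hxh (hxmax x (hIX.2.1 hx))
      have hyh0 : yh ∈ Y₀ := by
        obtain ⟨x, hx⟩ := hIY.2.2.1
        exact hIY.2.2.2.1 x hx yh hyh (hymax x (hIY.2.1 hx))
      obtain ⟨r, hr⟩ : ∃ r : V → ℕ, ∀ w, r w = if w ∈ X₀ then 3 * N + rX w else
        if w ∈ verts X then rX w else if w = yh then 4 * N + rY w else
        if w ∈ Y₀ then 2 * N + rY w else N + rY w := ⟨_, fun _ => rfl⟩
      have hr1 : ∀ x ∈ X₀, r x = 3 * N + rX x := fun x hx => by rw [hr]; simp [hx]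
      have hr2 : ∀ x ∈ verts X, x ∉ X₀ → r x = rX x := fun x hx hx' => by rw [hr]; simp [hx, hx']
      have hYX : ∀ y ∈ verts Y, y ∉ verts X ∧ y ∉ X₀ :=
        fun y hy => ⟨hdr hy, fun h => hdr hy (hIX.2.1 h)⟩
      have hr3 : r yh = 4 * N + rY yh := by rw [hr]; simp [hYX yh hyh]
      have hr4 : ∀ y ∈ Y₀, y ≠ yh → r y = 2 * N + rY y := fun y hy hy' => by
        rw [hr]; simp [hYX y (hIY.2.1 hy), hy, hy']
      have hr5 : ∀ y ∈ verts Y, y ∉ Y₀ → r y = N + rY y := fun y hy hy' => by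
        have : y ≠ yh := fun e => hy' (e ▸ hyh0)
        rw [hr]; simp [hYX y hy, hy', this]
      have hXr : ∀ x ∈ verts X, (x ∈ X₀ ∧ r x = 3 * N + rX x) ∨ (x ∉ X₀ ∧ r x = rX x) := by
        intro x hx
        by_cases h : x ∈ X₀
        · exact Or.inl ⟨h, hr1 x h⟩
        · exact Or.inr ⟨h, hr2 x hx h⟩
      have hYr : ∀ y ∈ verts Y, (y = yh ∧ r y = 4 * N + rY y) ∨ (y ≠ yh ∧ y ∈ Y₀ ∧ r y = 2 * N + rY y)
          ∨ (y ≠ yh ∧ y ∉ Y₀ ∧ r y = N + rY y) := by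
        intro y hy
        by_cases h : y = yh
        · subst h; exact Or.inl ⟨rfl, hr3⟩
        · by_cases h' : y ∈ Y₀
          · exact Or.inr (Or.inl ⟨h, h', hr4 y h' h⟩)
          · exact Or.inr (Or.inr ⟨h, h', hr5 y hy h'⟩)
      have hIX' : Ind r X X₀ := by
        apply hIX.congr
        intro x hx x' hx' hlt
        have := hN1 x hx
        have := hN1 x' hx'
        rcases hXr x hx with ⟨g, e⟩ | ⟨g, e⟩ <;> rcases hXr x' hx' with ⟨g', e'⟩ | ⟨g', e'⟩
        · omega
        · exact absurd (hIX.2.2.2.1 x g x' hx' hlt.le) g'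
        · omega
        · omega
      have hIY' : Ind r Y Y₀ := by
        apply hIY.congr
        intro x hx x' hx' hlt
        have := hN2 x hx
        have := hN2 x' hx'
        have := hymax x' hx'
        rcases hYr x hx with ⟨rfl, e⟩ | ⟨g, g2, e⟩ | ⟨g, g2, e⟩ <;>
          rcases hYr x' hx' with ⟨g', e'⟩ | ⟨g', g2', e'⟩ | ⟨g', g2', e'⟩
        · omega
        · omega
        · omega
        · omega
        · omega
        · exact absurd (hIY.2.2.2.1 x g2 x' hx' hlt.le) g2'
        · omega
        · omega
        · omega
      have hne : ∀ x ∈ verts X, ∀ y ∈ verts Y, r x ≠ r y := by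
        intro x hx y hy
        have := hN1 x hx
        have := hN2 y hy
        rcases hXr x hx with ⟨g, e⟩ | ⟨g, e⟩ <;>
          rcases hYr y hy with ⟨g', e'⟩ | ⟨g', g2', e'⟩ | ⟨g', g2', e'⟩ <;> omega
      have hxh3 := hr1 xh hxh0
      refine starDecV_of_ind (r := r) (n := a + 1 + b) hpJ
        (core (n := n) (a := a) (b := b) ih (by omega) hX hY hpX hpY hd ?_ hIX'.full hIY'.full
        (xh := xh) hxh ?_ (Y₁ := {yh}) ?_ (by simp) (eul_singleton hY hyh)
        (union_subset_union hIX.2.1 hIY.2.1) ⟨xh, mem_union_left _ hxh0⟩ ?_)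
      · intro v hv w hw e
        rw [mem_coe, mem_union] at hv hw
        rcases hv with hv | hv <;> rcases hw with hw | hw
        · exact hIX'.1 hv hw e
        · exact absurd e (hne _ hv _ hw)
        · exact absurd e.symm (hne _ hw _ hv)
        · exact hIY'.1 hv hw e
      · intro x hx
        have := hxmax x hx
        rcases hXr x hx with ⟨g, e⟩ | ⟨g, e⟩ <;> omega
      · ext y
        rw [mem_singleton, mem_filter]
        have := hN1 xh hxh
        constructor
        · rintro rfl; exact ⟨hyh, by omega⟩
        · rintro ⟨h, h'⟩
          have := hN2 y h
          rcases hYr y h with ⟨g', e'⟩ | ⟨g', g2', e'⟩ | ⟨g', g2', e'⟩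
          · exact g'
          · omega
          · omega
      · intro t ht v hv hle
        rw [mem_union] at ht hv ⊢
        rcases ht with ht | ht
        · have ht' := hr1 t ht
          rcases hv with hv | hv
          · exact Or.inl (hIX'.2.2.2.1 t ht v hv hle)
          · right
            have := hN2 v hv
            rcases hYr v hv with ⟨g', e'⟩ | ⟨g', g2', e'⟩ | ⟨g', g2', e'⟩
            · rw [g']; exact hyh0
            · exact g2'
            · omega
        · rcases hv with hv | hv
          · left
            have := hN1 v hv
            rcases hXr v hv with ⟨g, e⟩ | ⟨g, e⟩
            · exact g
            · rcases hYr t (hIY.2.1 ht) with ⟨g', e'⟩ | ⟨g', g2', e'⟩ | ⟨g', g2', e'⟩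
              · omega
              · omega
              · exact absurd ht g2'
          · exact Or.inr (hIY'.2.2.2.1 t ht v hv hle)
    · intro Y₀ h1 h2 h0
      rcases starDecV_cases h1 with ⟨rfl, _⟩ | ⟨_, rX, _, hIX⟩
      · have := hpX.unique pureN_single; omega
      rcases starDecV_cases h2 with ⟨rfl, rfl⟩ | ⟨_, rY, _, hIY⟩
      · have := hpY.unique pureN_single; omega
      obtain ⟨N1, hN1⟩ := exists_bound rX (verts X)
      obtain ⟨N2, hN2⟩ := exists_bound rY (verts Y)
      set N := N1 + N2 with hN
      obtain ⟨xh, hxh, hxmax⟩ := Finset.exists_max_image (verts X) rX hIX.2.2.1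
      obtain ⟨r, hr⟩ : ∃ r : V → ℕ, ∀ w, r w = if w ∈ verts X then N + rX w else
        if w ∈ Y₀ then 2 * N + rY w else rY w := ⟨_, fun _ => rfl⟩
      have hXr : ∀ x ∈ verts X, r x = N + rX x := fun x hx => by rw [hr]; simp [hx]
      have hYr : ∀ y ∈ verts Y, (y ∈ Y₀ ∧ r y = 2 * N + rY y) ∨ (y ∉ Y₀ ∧ r y = rY y) := by
        intro y hy
        rw [hr]
        by_cases h : y ∈ Y₀ <;> simp [h, hdr hy]
      have hIX' : Ind r X (verts X) := by
        apply hIX.congr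
        intro x hx x' hx' hlt
        rw [hXr x hx, hXr x' hx']; omega
      have hIY' : Ind r Y Y₀ := by
        apply hIY.congr
        intro x hx x' hx' hlt
        have := hN2 x hx
        have := hN2 x' hx'
        rcases hYr x hx with ⟨g, e⟩ | ⟨g, e⟩ <;> rcases hYr x' hx' with ⟨g', e'⟩ | ⟨g', e'⟩
        · omega
        · exact absurd (hIY.2.2.2.1 x g x' hx' hlt.le) g'
        · omega
        · omega
      have hne : ∀ x ∈ verts X, ∀ y ∈ verts Y, r x ≠ r y := by
        intro x hx y hy
        have := hN1 x hx
        have := hN2 y hy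
        have := hXr x hx
        rcases hYr y hy with ⟨g', e'⟩ | ⟨g', e'⟩ <;> omega
      refine starDecV_of_ind (r := r) (n := a + 1 + b) hpJ
        (core (n := n) (a := a) (b := b) ih (by omega) hX hY hpX hpY hd ?_ hIX'.full hIY'.full
        (xh := xh) hxh ?_ (Y₁ := Y₀) ?_ hIY.2.2.1 h0
        (hIY.2.1.trans subset_union_right) hIY.2.2.1 ?_)
      · intro v hv w hw e
        rw [mem_coe, mem_union] at hv hw
        rcases hv with hv | hv <;> rcases hw with hw | hw
        · exact hIX'.1 hv hw e
        · exact absurd e (hne _ hv _ hw)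
        · exact absurd e.symm (hne _ hw _ hv)
        · exact hIY'.1 hv hw e
      · intro x hx
        have := hxmax x hx
        rw [hXr x hx, hXr xh hxh]; omega
      · ext y
        rw [mem_filter, hXr xh hxh]
        have := hN1 xh hxh
        constructor
        · intro hy
          refine ⟨hIY.2.1 hy, ?_⟩
          rcases hYr y (hIY.2.1 hy) with ⟨g', e'⟩ | ⟨g', e'⟩
          · omega
          · exact absurd hy g'
        · rintro ⟨h, h'⟩
          have := hN2 y h
          rcases hYr y h with ⟨g', e'⟩ | ⟨g', e'⟩
          · exact g'
          · omega
      · intro t ht v hv hle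
        rw [mem_union] at hv
        rcases hv with hv | hv
        · exfalso
          have := hN1 v hv
          have := hXr v hv
          rcases hYr t (hIY.2.1 ht) with ⟨g', e'⟩ | ⟨g', e'⟩
          · omega
          · exact absurd ht g'
        · exact hIY'.2.2.2.1 t ht v hv hle

theorem euler_of_trivial {K : Finset (Finset V)} (h : TrivialRedHomology K) :
    ∑ σ ∈ K, (-1 : ℤ) ^ σ.card = 0 := by
  obtain ⟨-, h0, hex⟩ := h
  set R : ℕ → ℕ := fun n => Module.finrank ℤ (LinearMap.range (bdryZ K n)) with hR
  set c : ℕ → ℕ := fun n => (kfaces K n).card with hc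
  have c0 : c 0 = R 0 := by
    change (kfaces K 0).card = Module.finrank ℤ (LinearMap.range (bdryZ K 0))
    rw [h0, finrank_top, Module.finrank_fintype_fun_eq_card, Fintype.card_coe]
  have cs : ∀ n, c (n + 1) = R (n + 1) + R n := by
    intro n
    have := Submodule.finrank_quotient_add_finrank (LinearMap.ker (bdryZ K n))
    rw [LinearEquiv.finrank_eq (LinearMap.quotKerEquivRange (bdryZ K n)), hex n, Module.finrank_fintype_fun_eq_card, Fintype.card_coe] at this
    simp only [hR, hc]; omega
  have hsum : ∀ N, ∑ n ∈ range (N + 1), (-1 : ℤ) ^ n * c n = (-1) ^ N * R N := by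
    intro N
    induction N with
    | zero => simp [c0]
    | succ N ih => rw [sum_range_succ, ih, cs]; push_cast; ring
  set N := K.sup Finset.card with hN
  have hcz : c (N + 1) = 0 := by
    simp only [hc, kfaces, card_eq_zero, filter_eq_empty_iff]
    intro σ hσ
    have : σ.card ≤ N := Finset.le_sup (f := Finset.card) hσ
    omega
  have hRz : R N = 0 := by have := cs N; omega
  have h1 := hsum N
  rw [hRz] at h1
  rw [← Finset.sum_fiberwise_of_maps_to (s := K) (t := range (N + 1)) (g := Finset.card)]
  · rw [← mul_zero ((-1 : ℤ) ^ N)]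
    rw [Nat.cast_zero] at h1
    rw [← h1]
    apply sum_congr rfl
    intro n _
    rw [sum_congr rfl (g := fun _ => (-1 : ℤ) ^ n)]
    · simp [hc, kfaces, mul_comm]
    · intro σ hσ
      rw [(mem_filter.1 hσ).2]
  · intro σ hσ
    rw [mem_range, Nat.lt_succ_iff]
    exact Finset.le_sup (f := Finset.card) hσ

/-- Chains in a family of finite sets. -/
def chn (Q : Finset (Finset V)) : Finset (Finset (Finset V)) :=
  Q.powerset.filter fun c => ∀ σ ∈ c, ∀ τ ∈ c, σ ⊆ τ ∨ τ ⊆ σ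

theorem mem_chn {Q : Finset (Finset V)} {c : Finset (Finset V)} :
    c ∈ chn Q ↔ c ⊆ Q ∧ ∀ σ ∈ c, ∀ τ ∈ c, σ ⊆ τ ∨ τ ⊆ σ := by
  simp [chn]

theorem chn_rec {Q : Finset (Finset V)} {σ : Finset V} (hσ : σ ∈ Q)
    (hmax : ∀ τ ∈ Q, τ.card ≤ σ.card) :
    ∑ c ∈ chn Q, (-1 : ℤ) ^ c.card = ∑ c ∈ chn (Q.erase σ), (-1 : ℤ) ^ c.card -
      ∑ c ∈ chn (Q.filter fun τ => τ ⊂ σ), (-1 : ℤ) ^ c.card := by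
  rw [← Finset.sum_filter_add_sum_filter_not (chn Q) (fun c => σ ∉ c),
    sub_eq_add_neg, ← Finset.sum_neg_distrib]
  congr 1
  · apply Finset.sum_congr _ (fun _ _ => rfl)
    ext c
    simp only [mem_filter, mem_chn, subset_erase]
    tauto
  · symm
    have hn : ∀ c ∈ chn (Q.filter fun τ => τ ⊂ σ), σ ∉ c := by
      intro c hc h
      exact (mem_filter.1 ((mem_chn.1 hc).1 h)).2.2 (subset_refl _)
    apply Finset.sum_bij (fun c _ => insert σ c)
    · intro c hc
      rw [mem_chn] at hc
      rw [mem_filter, mem_chn]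
      refine ⟨⟨insert_subset hσ (hc.1.trans (filter_subset _ _)), ?_⟩, by simp⟩
      intro a ha b hb
      have hs : ∀ a ∈ c, a ⊆ σ := fun a ha => (mem_filter.1 (hc.1 ha)).2.1
      rcases mem_insert.1 ha with ea | ha <;> rcases mem_insert.1 hb with eb | hb
      · rw [ea, eb]; exact Or.inl (subset_refl _)
      · rw [ea]; exact Or.inr (hs _ hb)
      · rw [eb]; exact Or.inl (hs _ ha)
      · exact hc.2 a ha b hb
    · intro a ha b hb hab
      rw [← erase_insert (hn a ha), ← erase_insert (hn b hb), hab]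
    · intro c hc
      rw [mem_filter, mem_chn, not_not] at hc
      refine ⟨c.erase σ, ?_, insert_erase hc.2⟩
      rw [mem_chn]
      refine ⟨?_, fun a ha b hb => hc.1.2 a (mem_of_mem_erase ha) b (mem_of_mem_erase hb)⟩
      intro a ha
      rw [mem_erase] at ha
      rw [mem_filter]
      refine ⟨hc.1.1 ha.2, ?_⟩
      rcases hc.1.2 a ha.2 σ hc.2 with h | h
      · exact Finset.ssubset_iff_subset_ne.2 ⟨h, ha.1⟩
      · exact absurd (Finset.eq_of_subset_of_card_le h (hmax a (hc.1.1 ha.2))).symm ha.1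
    · intro c hc
      rw [card_insert_of_notMem (hn c hc)]; ring

theorem chn_sum (S : Finset V) (Q : Finset (Finset V)) (h1 : ∀ σ ∈ Q, (σ ∩ S).Nonempty)
    (h2 : ∀ σ ∈ Q, ∀ τ ⊆ σ, (τ ∩ S).Nonempty → τ ∈ Q) :
    ∑ c ∈ chn Q, (-1 : ℤ) ^ c.card =
      1 + ∑ σ ∈ Q.filter (fun σ => σ ⊆ S), (-1 : ℤ) ^ σ.card := by
  induction hn : Q.card using Nat.strong_induction_on generalizing Q with
  | _ n ih =>
    rcases Q.eq_empty_or_nonempty with rfl | hne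
    · have : chn (∅ : Finset (Finset V)) = {∅} := by
        ext c
        rw [mem_chn, mem_singleton, subset_empty]
        exact ⟨fun h => h.1, fun h => ⟨h, by simp [h]⟩⟩
      rw [this]; simp
    · obtain ⟨σ, hσ, hmax⟩ := Finset.exists_max_image Q Finset.card hne
      have hlt : (Q.erase σ).card < n := by
        rw [← hn]; exact card_erase_lt_of_mem hσ
      have hlt2 : (Q.filter fun τ => τ ⊂ σ).card < n := by
        refine lt_of_le_of_lt (card_le_card ?_) hlt
        intro τ hτ
        rw [mem_filter] at hτ
        exact mem_erase.2 ⟨hτ.2.ne, hτ.1⟩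
      rw [chn_rec hσ hmax, ih _ hlt (Q.erase σ) (fun τ hτ => h1 τ (mem_of_mem_erase hτ)) ?_ rfl,
        ih _ hlt2 (Q.filter fun τ => τ ⊂ σ) (fun τ hτ => h1 τ (mem_filter.1 hτ).1) ?_ rfl]
      · have hA : ∑ τ ∈ Q.filter (fun τ => τ ⊆ S), (-1 : ℤ) ^ τ.card =
            ∑ τ ∈ (Q.erase σ).filter (fun τ => τ ⊆ S), (-1 : ℤ) ^ τ.card +
              if σ ⊆ S then (-1 : ℤ) ^ σ.card else 0 := by
          simp only [sum_filter]
          rw [Finset.sum_erase_add _ _ hσ]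
        have hB : ∑ τ ∈ (σ ∩ S).powerset, (-1 : ℤ) ^ τ.card = 0 :=
          Finset.sum_powerset_neg_one_pow_card_of_nonempty (h1 σ hσ)
        have hC : (σ ∩ S).powerset = insert ∅ ((Q.filter fun τ => τ ⊆ σ).filter fun τ => τ ⊆ S) := by
          ext τ
          simp only [mem_powerset, mem_insert, mem_filter, subset_inter_iff]
          constructor
          · rintro ⟨g1, g2⟩
            rcases τ.eq_empty_or_nonempty with h | h
            · exact Or.inl h
            · exact Or.inr ⟨⟨h2 σ hσ τ g1 (by rwa [inter_eq_left.2 g2]), g1⟩, g2⟩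
          · rintro (rfl | ⟨⟨_, g1⟩, g2⟩)
            · simp
            · exact ⟨g1, g2⟩
        have hD : (Q.filter fun τ => τ ⊂ σ) = (Q.filter fun τ => τ ⊆ σ).erase σ := by
          ext τ
          simp only [mem_filter, mem_erase, Finset.ssubset_iff_subset_ne]
          tauto
        have hE : ∑ τ ∈ (Q.filter fun τ => τ ⊆ σ).filter (fun τ => τ ⊆ S), (-1 : ℤ) ^ τ.card =
            ∑ τ ∈ (Q.filter fun τ => τ ⊂ σ).filter (fun τ => τ ⊆ S), (-1 : ℤ) ^ τ.card +
              if σ ⊆ S then (-1 : ℤ) ^ σ.card else 0 := by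
          rw [hD]
          simp only [sum_filter _ _ (s := Q.filter _), sum_filter _ _ (s := (Q.filter _).erase _)]
          have hmm : σ ∈ Q.filter fun τ => τ ⊆ σ := mem_filter.2 ⟨hσ, subset_refl _⟩
          rw [Finset.sum_erase_add _ _ hmm]
        rw [hC, sum_insert, card_empty, pow_zero, hE] at hB
        · rw [hA]; linarith
        · intro hmem
          have := h1 ∅ (mem_filter.1 (mem_filter.1 hmem).1).1
          simp at this
      · intro a ha b hb hbS
        rw [mem_filter] at ha ⊢
        exact ⟨h2 a ha.1 b hb hbS, lt_of_le_of_lt hb ha.2⟩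
      · intro a ha b hb hbS
        rw [mem_erase] at ha ⊢
        refine ⟨?_, h2 a ha.2 b hb hbS⟩
        rintro rfl
        exact ha.1 (Finset.eq_of_subset_of_card_le hb (hmax a ha.2)).symm

theorem starSet_eq_chn {Y : Finset (Finset V)} (hY : IsCplx Y) {S : Finset V} (hS : S ⊆ verts Y)
    (hne : S.Nonempty) : starSet (S.image fun v => ({v} : Finset V)) (sd Y) =
      chn (Y.filter fun σ => (σ ∩ S).Nonempty) := by
  obtain ⟨s, hs⟩ := hne
  have hYne : Y ≠ ∅ := by
    rintro rfl
    have := hS hs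
    simp [verts] at this
  have hsd : ∀ c, c ∈ sd Y ↔ c ⊆ Y ∧ ∅ ∉ c ∧ ∀ σ ∈ c, ∀ τ ∈ c, σ ⊆ τ ∨ τ ⊆ σ := by
    intro c
    unfold sd
    rw [if_neg hYne, mem_filter, mem_powerset]
  ext c
  rw [mem_chn]
  unfold starSet
  rw [mem_filter, hsd]
  simp only [hsd, mem_image]
  constructor
  · rintro ⟨⟨h1, h2, h3⟩, _, ⟨v, hv, rfl⟩, h4, h5, h6⟩
    refine ⟨?_, h3⟩
    intro σ hσ
    rw [mem_filter]
    refine ⟨h1 hσ, v, ?_⟩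
    rw [mem_inter]
    refine ⟨?_, hv⟩
    rcases h6 σ (mem_union_left _ hσ) {v} (by simp) with h | h
    · rcases subset_singleton_iff.1 h with rfl | rfl
      · exact absurd hσ h2
      · simp
    · simpa using h
  · rintro ⟨h1, h2⟩
    have h1' : c ⊆ Y := h1.trans (filter_subset _ _)
    have hm : ∀ σ ∈ c, (σ ∩ S).Nonempty := fun σ hσ => (mem_filter.1 (h1 hσ)).2
    have h0 : ∅ ∉ c := fun h => by simpa using hm ∅ h
    refine ⟨⟨h1', h0, h2⟩, ?_⟩
    obtain ⟨v, hvS, hvc⟩ : ∃ v ∈ S, ∀ σ ∈ c, v ∈ σ := by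
      rcases c.eq_empty_or_nonempty with rfl | hc
      · exact ⟨s, hs, by simp⟩
      · obtain ⟨σ, hσ, hmin⟩ := Finset.exists_min_image c Finset.card hc
        obtain ⟨v, hv⟩ := hm σ hσ
        rw [mem_inter] at hv
        refine ⟨v, hv.2, ?_⟩
        intro τ hτ
        rcases h2 σ hσ τ hτ with h | h
        · exact h hv.1
        · rw [Finset.eq_of_subset_of_card_le h (hmin τ hτ)]; exact hv.1
    refine ⟨{v}, ⟨v, hvS, rfl⟩, ?_, ?_, ?_⟩
    · exact union_subset h1' (by simpa using hY.singleton_mem (hS hvS))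
    · rw [mem_union, mem_singleton]
      rintro (h | h)
      · exact h0 h
      · exact (singleton_ne_empty v) h.symm
    · intro a ha b hb
      rw [mem_union, mem_singleton] at ha hb
      rcases ha with ha | rfl <;> rcases hb with hb | rfl
      · exact h2 a ha b hb
      · right; simpa using hvc a ha
      · left; simpa using hvc b hb
      · left; exact subset_refl _

theorem eul_of_trivial {Y : Finset (Finset V)} (hY : IsCplx Y) {S : Finset V} (hS : S ⊆ verts Y)
    (hne : S.Nonempty)
    (h : TrivialRedHomology (starSet (S.image fun v => ({v} : Finset V)) (sd Y))) :
    eul Y S = 0 := by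
  have h1 := euler_of_trivial h
  rw [starSet_eq_chn hY hS hne, chn_sum S] at h1
  · rw [← h1]
    have hemp : ∅ ∈ Y := by
      obtain ⟨s, hs⟩ := hne
      exact hY.empty_mem ⟨_, hY.singleton_mem (hS hs)⟩
    have : Y.filter (fun σ => σ ⊆ S) =
        insert ∅ ((Y.filter fun σ => (σ ∩ S).Nonempty).filter fun σ => σ ⊆ S) := by
      ext σ
      simp only [mem_insert, mem_filter]
      constructor
      · rintro ⟨g1, g2⟩
        rcases σ.eq_empty_or_nonempty with h | h
        · exact Or.inl h
        · exact Or.inr ⟨⟨g1, by rwa [inter_eq_left.2 g2]⟩, g2⟩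
      · rintro (rfl | ⟨⟨g1, _⟩, g2⟩)
        · exact ⟨hemp, by simp⟩
        · exact ⟨g1, g2⟩
    unfold eul
    rw [this, sum_insert (by simp)]
    simp
  · intro σ hσ; exact (mem_filter.1 hσ).2
  · intro σ hσ τ hτ hn
    rw [mem_filter] at hσ ⊢
    exact ⟨hY _ hσ.1 _ hτ, hn⟩

section Transport

variable {W : Type*} [DecidableEq W]

/-- Relabelling of a complex. -/
def mp (f : V → W) (K : Finset (Finset V)) : Finset (Finset W) := K.image fun σ => σ.image f

theorem mem_mp {f : V → W} {K : Finset (Finset V)} {ρ : Finset W} :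
    ρ ∈ mp f K ↔ ∃ σ ∈ K, σ.image f = ρ := by
  simp [mp]

theorem verts_mp (f : V → W) (K : Finset (Finset V)) : verts (mp f K) = (verts K).image f := by
  ext w
  simp only [mem_verts, mem_mp, mem_image]
  constructor
  · rintro ⟨_, ⟨σ, hσ, rfl⟩, h⟩
    obtain ⟨v, hv, rfl⟩ := mem_image.1 h
    exact ⟨v, ⟨σ, hσ, hv⟩, rfl⟩
  · rintro ⟨v, ⟨σ, hσ, hv⟩, rfl⟩
    exact ⟨_, ⟨σ, hσ, rfl⟩, mem_image_of_mem _ hv⟩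

theorem lk_mp {f : V → W} (hf : Function.Injective f) (K : Finset (Finset V)) (w : V) :
    lk {f w} (mp f K) = mp f (lk {w} K) := by
  ext ρ
  rw [mem_lk, mem_mp, mem_mp]
  constructor
  · rintro ⟨h, σ, hσ, h2⟩
    have hw : w ∈ σ := by
      have : f w ∈ σ.image f := by rw [h2]; simp
      obtain ⟨v, hv, e⟩ := mem_image.1 this
      rwa [← hf e]
    refine ⟨σ.erase w, mem_lk.2 ⟨by simp, by rwa [insert_erase hw]⟩, ?_⟩
    rw [image_erase hf, h2, erase_insert h]
  · rintro ⟨σ, hσ, rfl⟩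
    rw [mem_lk] at hσ
    refine ⟨?_, _, hσ.2, by rw [image_insert]⟩
    intro h
    obtain ⟨v, hv, e⟩ := mem_image.1 h
    exact hσ.1 (hf e ▸ hv)

theorem IsCplx.mp {K : Finset (Finset V)} (hK : IsCplx K) (f : V → W) : IsCplx (mp f K) := by
  intro ρ hρ τ hτ
  obtain ⟨σ, hσ, rfl⟩ := mem_mp.1 hρ
  obtain ⟨σ', h1, rfl⟩ := Finset.subset_image_iff.1 hτ
  exact mem_mp.2 ⟨σ', hK _ hσ _ (by exact_mod_cast h1), rfl⟩

theorem PureDim.mp {K : Finset (Finset V)} {d : ℤ} (h : PureDim K d) {f : V → W}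
    (hf : Function.Injective f) : PureDim (mp f K) d := by
  refine ⟨h.1.image _, ?_, ?_⟩
  · intro ρ hρ
    obtain ⟨σ, hσ, rfl⟩ := mem_mp.1 hρ
    rw [card_image_of_injective _ hf]
    exact h.2.1 σ hσ
  · intro ρ hρ
    obtain ⟨σ, hσ, rfl⟩ := mem_mp.1 hρ
    obtain ⟨τ, h1, h2, h3⟩ := h.2.2 σ hσ
    exact ⟨τ.image f, mem_mp.2 ⟨τ, h1, rfl⟩, image_subset_image h2,
      by rw [card_image_of_injective _ hf, h3]⟩

theorem eul_mp {f : V → W} (hf : Function.Injective f) (K : Finset (Finset V)) (S : Finset V) :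
    eul (mp f K) (S.image f) = eul K S := by
  unfold eul
  symm
  apply Finset.sum_bij (fun σ _ => σ.image f)
  · intro σ hσ
    rw [mem_filter] at hσ ⊢
    exact ⟨mem_mp.2 ⟨σ, hσ.1, rfl⟩, image_subset_image hσ.2⟩
  · intro a _ b _ hab
    exact Finset.image_injective hf hab
  · intro ρ hρ
    rw [mem_filter] at hρ
    obtain ⟨σ, hσ, rfl⟩ := mem_mp.1 hρ.1
    exact ⟨σ, mem_filter.2 ⟨hσ, (Finset.image_subset_image_iff hf).1 hρ.2⟩, rfl⟩
  · intro σ _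
    rw [card_image_of_injective _ hf]

theorem toFinset_map (f : V → W) (L : List V) : (L.map f).toFinset = L.toFinset.image f := by
  ext w; simp

/-- Generic relabelling of the list form of the order. -/
theorem indL_map {f : V → W} (hf : Function.Injective f) {L : List V} {Y : Finset (Finset V)}
    {Y₀ : Finset V} (hne : L ≠ []) (hnd : L.Nodup) (hV : L.toFinset = verts Y)
    (horder : ∃ i < L.length, Y₀ = (L.drop i).toFinset)
    (hlink : ∀ i, (hi : i + 1 < L.length) →
      StarDecV (mp f (lk {L.get ⟨i, Nat.lt_of_succ_lt hi⟩} Y))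
        ((verts (lk {L.get ⟨i, Nat.lt_of_succ_lt hi⟩} Y) ∩ (L.drop (i + 1)).toFinset).image f))
    (hlast : StarDecV (mp f (lk {L.getLast hne} Y)) ((verts (lk {L.getLast hne} Y)).image f)) :
    IndL (L.map f) (mp f Y) (Y₀.image f) := by
  refine ⟨by simpa using hne, hnd.map hf, by rw [toFinset_map, hV, verts_mp], ?_, ?_, ?_⟩
  · obtain ⟨i, hi, rfl⟩ := horder
    exact ⟨i, by simpa using hi, by rw [← List.map_drop, toFinset_map]⟩
  · intro i hi
    have := hlink i (by simpa using hi)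
    rw [image_inter _ _ hf, ← lk_mp hf, ← verts_mp, ← lk_mp hf, ← toFinset_map, List.map_drop] at this
    simpa using this
  · rw [← lk_mp hf, ← verts_mp, ← lk_mp hf] at hlast
    rw [List.getLast_map]
    exact hlast

theorem StarDecV.mp {Y : Finset (Finset V)} {Y₀ : Finset V} (h : StarDecV Y Y₀) {f : V → W}
    (hf : Function.Injective f) : StarDecV (mp f Y) (Y₀.image f) := by
  induction h with
  | base => simpa [Paper.mp] using (StarDecV.base (V := W))
  | step Y Y₀ k hk hpure L hne hnd hV horder hlink hlast ih1 ih2 =>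
    obtain ⟨a1, a2, a3, a4, a5, a6⟩ := indL_map hf hne hnd hV horder ih1 ih2
    exact StarDecV.step _ _ k hk (hpure.mp hf) _ a1 a2 a3 a4 a5 a6

theorem IndL.mp {L : List V} {Y : Finset (Finset V)} {Y₀ : Finset V} (h : IndL L Y Y₀) {f : V → W}
    (hf : Function.Injective f) : IndL (L.map f) (mp f Y) (Y₀.image f) := by
  obtain ⟨a1, a2, a3, a4, a5, a6⟩ := h
  exact indL_map hf a1 a2 a3 a4 (fun i hi => (a5 i hi).mp hf) (a6.mp hf)

end Transport

theorem join_eq_jn {α β : Type*} [DecidableEq α] [DecidableEq β]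
    (X : Finset (Finset α)) (Y : Finset (Finset β)) :
    join X Y = jn (mp Sum.inl X) (mp Sum.inr Y) := by
  ext ρ
  simp only [join, mem_jn, mem_mp, mem_image, mem_product, Prod.exists]
  constructor
  · rintro ⟨a, b, ⟨h1, h2⟩, rfl⟩
    exact ⟨_, ⟨a, h1, rfl⟩, _, ⟨b, h2, rfl⟩, rfl⟩
  · rintro ⟨_, ⟨a, h1, rfl⟩, _, ⟨b, h2, rfl⟩, rfl⟩
    exact ⟨a, b, ⟨h1, h2⟩, rfl⟩

theorem sublist_left {α β : Type*} (L : List (α ⊕ β)) :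
    ((L.filterMap fun z => z.getLeft?).map Sum.inl).Sublist L := by
  induction L with
  | nil => simp
  | cons a L ih =>
    rcases a with a | a
    · exact ih.cons_cons _
    · exact ih.cons _

theorem sublist_right {α β : Type*} (L : List (α ⊕ β)) :
    ((L.filterMap fun z => z.getRight?).map Sum.inr).Sublist L := by
  induction L with
  | nil => simp
  | cons a L ih =>
    rcases a with a | a
    · exact ih.cons _
    · exact ih.cons_cons _

theorem exists_rank {L : List V} (h : L.Nodup) :
    ∃ r : V → ℕ, L.Pairwise (fun a b => r a < r b) ∧ ∀ i (hi : i < L.length), r L[i] = i :=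
  ⟨fun v => L.idxOf v, pairwise_idxOf h, fun i hi => h.idxOf_getElem i hi⟩

theorem indL_of_induces {L : List V} {Y : Finset (Finset V)} {Y₀ : Finset V} {n : ℕ}
    (h : InducesStarDecompV L Y Y₀) (hp : PureN Y (n + 1)) : IndL L Y Y₀ := by
  rcases h with ⟨_, rfl, _⟩ | h
  · have := hp.unique pureN_single; omega
  · exact h

end Helpers

/-- A specialized merging recipe: with `dim X, dim Y ≥ 0`, `sd X` star
decomposable in vertices, `(sd Y, Y₀)` star decomposable in vertices with
`st(Y₀, sd Y)` having trivial reduced homology, and `≺` (encoded by `L`) restricting to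
the given star decompositions in vertices and satisfying
`Y₀ = (V(X) ⊔ V(Y))_{≻x̂}` for `x̂` the `≺`-largest element of `V(X)`, the order `≺`
induces a star decomposition of `(sd (X * Y), Y₀)` in vertices. -/
theorem join_starDecV_nice {α β : Type*} [DecidableEq α] [DecidableEq β]
    (X : Finset (Finset α)) (Y : Finset (Finset β)) (hX : IsCplx X) (hY : IsCplx Y)
    (dX dY : ℤ) (hdX : 0 ≤ dX) (hdY : 0 ≤ dY) (hpX : PureDim X dX) (hpY : PureDim Y dY)
    (Y₀ : Finset β) (hY₀sub : Y₀ ⊆ verts Y) (hY₀ne : Y₀.Nonempty)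
    (hsdX : StarDecV X (verts X)) (hsdY : StarDecV Y Y₀)
    (hhom : TrivialRedHomology (starSet (Y₀.image fun v => ({v} : Finset β)) (sd Y)))
    (L : List (α ⊕ β)) (hnd : L.Nodup)
    (hcov : L.toFinset = (verts X).image Sum.inl ∪ (verts Y).image Sum.inr)
    (hresX : InducesStarDecompV (L.filterMap fun z => z.getLeft?) X (verts X))
    (hresY : InducesStarDecompV (L.filterMap fun z => z.getRight?) Y Y₀)
    (hafter : ∃ i, ∃ hi : i < L.length, (L.get ⟨i, hi⟩).isLeft ∧
      (∀ j, (hj : j < L.length) → i < j → (L.get ⟨j, hj⟩).isRight) ∧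
      (L.drop (i + 1)).toFinset = Y₀.image Sum.inr) :
    InducesStarDecompV L (join X Y) (Y₀.image Sum.inr) := by
  have hil : Function.Injective (Sum.inl : α → α ⊕ β) := Sum.inl_injective
  have hir : Function.Injective (Sum.inr : β → α ⊕ β) := Sum.inr_injective
  obtain ⟨a, rfl⟩ : ∃ a : ℕ, dX = a := ⟨dX.toNat, by omega⟩
  obtain ⟨b, rfl⟩ : ∃ b : ℕ, dY = b := ⟨dY.toNat, by omega⟩
  have nX : PureN X (a + 1) := pureN_iff.2 (by simpa using hpX)
  have nY : PureN Y (b + 1) := pureN_iff.2 (by simpa using hpY)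
  have nX' : PureN (mp (Sum.inl : α → α ⊕ β) X) (a + 1) :=
    pureN_iff.2 (by simpa using hpX.mp hil)
  have nY' : PureN (mp (Sum.inr : β → α ⊕ β) Y) (b + 1) :=
    pureN_iff.2 (by simpa using hpY.mp hir)
  have lX := (indL_of_induces hresX nX).mp hil
  have lY := (indL_of_induces hresY nY).mp hir
  obtain ⟨r, hp, hget⟩ := exists_rank hnd
  have iX := (indL_iff (hp.sublist (sublist_left L)) lX.2.2.1).1 lX
  have iY := (indL_iff (hp.sublist (sublist_right L)) lY.2.2.1).1 lY
  have he : eul (mp (Sum.inr : β → α ⊕ β) Y) (Y₀.image Sum.inr) = 0 := by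
    rw [eul_mp hir]
    exact eul_of_trivial hY hY₀sub hY₀ne hhom
  have hvX := verts_mp (Sum.inl : α → α ⊕ β) X
  have hvY := verts_mp (Sum.inr : β → α ⊕ β) Y
  have hd : Disjoint (verts (mp (Sum.inl : α → α ⊕ β) X)) (verts (mp (Sum.inr : β → α ⊕ β) Y)) := by
    rw [hvX, hvY, Finset.disjoint_left]
    intro v h1 h2
    obtain ⟨x, _, rfl⟩ := mem_image.1 h1
    obtain ⟨y, _, e⟩ := mem_image.1 h2
    simp at e
  have hcov' : L.toFinset = verts (jn (mp (Sum.inl : α → α ⊕ β) X) (mp (Sum.inr : β → α ⊕ β) Y)) := by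
    rw [verts_jn nX'.1 nY'.1, hvX, hvY, hcov]
  obtain ⟨i, hi, hleft, hright, hdrop⟩ := hafter
  have hmemL : ∀ v, v ∈ L ↔ v ∈ verts (mp (Sum.inl : α → α ⊕ β) X) ∪
      verts (mp (Sum.inr : β → α ⊕ β) Y) := by
    intro v
    rw [hvX, hvY, ← hcov, List.mem_toFinset]
  have hY₀mem : ∀ v, v ∈ Y₀.image (Sum.inr : β → α ⊕ β) ↔ v ∈ L ∧ r L[i] < r v := by
    intro v
    rw [← hdrop, List.mem_toFinset, mem_drop_succ_iff hp i hi]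
  rw [join_eq_jn]
  right
  refine (indL_iff hp hcov').2 (core (joinAB (a + b + 1)) le_rfl (hX.mp _) (hY.mp _) nX' nY' hd
    ?_ iX.full iY.full (xh := L[i]) ?_ ?_ (Y₁ := Y₀.image Sum.inr) ?_ (hY₀ne.image _) he ?_
    (hY₀ne.image _) ?_)
  · intro v hv w hw e
    have hv' := (hmemL v).2 hv
    obtain ⟨j, hj, rfl⟩ := List.mem_iff_getElem.1 hv'
    obtain ⟨k, hk, rfl⟩ := List.mem_iff_getElem.1 ((hmemL w).2 hw)
    rw [hget, hget] at e
    subst e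
    rfl
  · have hm := (hmemL L[i]).1 (List.getElem_mem _)
    rcases mem_union.1 hm with h | h
    · exact h
    · rw [hvY] at h
      obtain ⟨y, _, e⟩ := mem_image.1 h
      have hl : (L[i]).isLeft = true := hleft
      rw [← e] at hl
      simp at hl
  · intro x hx
    obtain ⟨j, hj, rfl⟩ := List.mem_iff_getElem.1 ((hmemL x).2 (mem_union_left _ hx))
    rw [hget, hget]
    by_contra hc
    have hrr : (L[j]).isRight = true := hright j hj (by omega)
    rw [hvX] at hx
    obtain ⟨y, _, e⟩ := mem_image.1 hx
    rw [← e] at hrr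
    simp at hrr
  · ext v
    rw [mem_filter]
    constructor
    · intro h
      refine ⟨?_, ((hY₀mem v).1 h).2⟩
      rw [hvY]
      exact image_subset_image hY₀sub h
    · rintro ⟨h1, h2⟩
      exact (hY₀mem v).2 ⟨(hmemL v).2 (mem_union_right _ h1), h2⟩
  · refine subset_trans ?_ subset_union_right
    rw [hvY]
    exact image_subset_image hY₀sub
  · intro t ht v hv hle
    rw [hY₀mem] at ht ⊢
    exact ⟨(hmemL v).2 hv, lt_of_lt_of_le ht.2 hle⟩

end Paper
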